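/- Let T be a torus and C, C' essential oriented simple closed curves in T. Then C' can be obtained from C by a surgery along an embedded arc β with β ∩ C = ∂β if and only if the algebraic intersection number C'·C equals ±2. -/

import Mathlib

/-- The torus `T = ℝ/ℤ × ℝ/ℤ`. -/
def Torus : Type := AddCircle (1 : ℝ) × AddCircle (1 : ℝ)

noncomputable instance : TopologicalSpace Torus :=
  inferInstanceAs (TopologicalSpace (AddCircle (1 : ℝ) × AddCircle (1 : ℝ)))

/-- The covering projection `ℝ × ℝ → T`. -/
noncomputable def torusMk (v : ℝ × ℝ) : Torus := ((v.1 : AddCircle (1 : ℝ)), (v.2 : AddCircle (1 : ℝ)))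

/-- An essential oriented simple closed curve on the torus, given by a
continuous lift `f : ℝ → ℝ × ℝ` which is periodic of period `1` up to the
deck translation `(p, q)`; the pair `(p, q)` is the homology class of the
curve, it is primitive (coprime) since the curve is essential and simple,
and the induced loop `ℝ/ℤ → T` is injective. -/
structure TorusCurve where
  /-- a lift of the curve to the universal cover -/
  f : ℝ → ℝ × ℝ
  cont : Continuous f
  /-- the slope: first coordinate of the homology class -/
  p : ℤ
  /-- the slope: second coordinate of the homology class -/
  q : ℤ
  prim : IsCoprime p q
  per : ∀ x : ℝ, f (x + 1) = f x + ((p : ℝ), (q : ℝ))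
  inj : ∀ x y : ℝ, torusMk (f x) = torusMk (f y) → ∃ n : ℤ, y = x + n

/-- The image of the curve in the torus. -/
def TorusCurve.image (C : TorusCurve) : Set Torus :=
  Set.range fun x => torusMk (C.f x)

/-- `C'` is obtained from `C` by a surgery along an embedded arc `β`:
there is an embedded band `N(β) ≅ β × I = [0,1] × [0,1]` with
`C ∩ N(β) = ∂β × I = {0,1} × I`, and
`C' = (C - ∂β × I) ∪ (β × ∂I)`. -/
def ObtainedBySurgery (C C' : Set Torus) : Prop :=
  ∃ e : ℝ × ℝ → Torus, Continuous e ∧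
    Set.InjOn e (Set.Icc 0 1 ×ˢ Set.Icc 0 1) ∧
    C ∩ e '' (Set.Icc 0 1 ×ˢ Set.Icc 0 1)
      = e '' (({0, 1} : Set ℝ) ×ˢ Set.Icc 0 1) ∧
    C' = (C \ e '' (({0, 1} : Set ℝ) ×ˢ Set.Icc 0 1))
          ∪ e '' (Set.Icc 0 1 ×ˢ ({0, 1} : Set ℝ))

/-!
Suppose that `C'` arises from `C` by surgery along a band. The two sides of the band run along `C`
in the same direction, since otherwise `C'` would be disconnected. Removing them from `C` leaves two
gaps; closing each of these by a diagonal of the band gives two loops, of homology classes `-n` and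
`[C] + n` for some `n`, which cross exactly once. The algebraic intersection number of such loops
`α`, `β` is `±1`. If it is not zero, then `(s, t) ↦ α s - β t` is at bounded distance from a linear
isomorphism of the plane, hence onto, so that every lattice point is a difference of a period of `α`
and a period of `β`. If it were zero, a linear change of coordinates would make
`exp (α s - β t) - 1` biperiodic with zeros only at the lattice points, so its winding number around
such a zero would vanish; but a transversal crossing gives an odd one. Finally `[C] + 2 n` is
a multiple of `[C']`, because the gaps and edges of the band make up a closed path in `C'`;
this yields `[C'] · [C] = ±2`.

Conversely, primitive classes with intersection number `±2` are congruent modulo `2`, so they are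
`a + b` and `a - b` for a lattice basis `a`, `b`. A curve of class `a + b` that follows the axes `a`
and `b` and turns at their intersection point differs from its mirror image by a surgery at a square
around that point.
-/

open Set Metric unitInterval

section ContinuousLog

variable {A B : Type*} [TopologicalSpace A] [TopologicalSpace B]

/-- `φ` has a continuous logarithm. For a map from a circle to `ℂ \ {0}` this says that the winding
number vanishes, which is all that is needed here of the degree of plane maps. -/
def HasContinuousLog (φ : A → ℂ) : Prop :=
  ∃ L : C(A, ℂ), ∀ x, Complex.exp (L x) = φ x

namespace HasContinuousLog

theorem comp {φ : A → ℂ} (hφ : HasContinuousLog φ) {f : B → A} (hf : Continuous f) :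
    HasContinuousLog (φ ∘ f) :=
  let ⟨L, hL⟩ := hφ
  ⟨L.comp ⟨f, hf⟩, fun x => hL (f x)⟩

theorem const {c : ℂ} (hc : c ≠ 0) : HasContinuousLog fun _ : A => c :=
  ⟨.const A (Complex.log c), fun _ => Complex.exp_log hc⟩

theorem mul {φ ψ : A → ℂ} (hφ : HasContinuousLog φ) (hψ : HasContinuousLog ψ) :
    HasContinuousLog fun x => φ x * ψ x :=
  let ⟨L, hL⟩ := hφ
  let ⟨M, hM⟩ := hψ
  ⟨L + M, fun x => by rw [ContinuousMap.add_apply, Complex.exp_add, hL, hM]⟩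

theorem of_simplyConnected [SimplyConnectedSpace A] [LocallyPathConnectedSpace A] {φ : A → ℂ}
    (hφ : Continuous φ) (hne : ∀ x, φ x ≠ 0) : HasContinuousLog φ := by
  obtain ⟨x₀⟩ : Nonempty A := inferInstance
  obtain ⟨L, ⟨-, hL⟩, -⟩ := Complex.isCoveringMapOn_exp.existsUnique_continuousMap_lifts
    ⟨φ, hφ⟩ (Complex.exp_log (hne x₀)) hne
  exact ⟨L, congrFun hL⟩

theorem of_homotopy {H : I × A → ℂ} (hH : Continuous H) (hne : ∀ z, H z ≠ 0)
    (h₀ : HasContinuousLog fun x => H (0, x)) : HasContinuousLog fun x => H (1, x) := by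
  obtain ⟨L, hL⟩ := h₀
  let K : C(I × A, {z : ℂ // z ≠ 0}) := ⟨fun z => ⟨H z, hne z⟩, hH.subtype_mk _⟩
  have hK : ∀ x, K (0, x) = ⟨Complex.exp (L x), Complex.exp_ne_zero _⟩ :=
    fun x => Subtype.ext (hL x).symm
  let M := Complex.isCoveringMap_exp.liftHomotopy K L hK
  exact ⟨M.comp ((ContinuousMap.const A 1).prodMk (.id A)), fun x =>
    congrArg Subtype.val (congrFun (Complex.isCoveringMap_exp.liftHomotopy_lifts K L hK) (1, x))⟩

/-- The hypothesis of Rouché's theorem puts `ψ / φ` in the domain of the principal logarithm. -/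
theorem of_norm_sub_lt {φ ψ : A → ℂ} (hφ : HasContinuousLog φ) (hψc : Continuous ψ)
    (hlt : ∀ x, ‖ψ x - φ x‖ < ‖φ x‖) : HasContinuousLog ψ := by
  have hφc : Continuous φ := by
    obtain ⟨L, hL⟩ := hφ
    exact (Complex.continuous_exp.comp L.continuous).congr hL
  have hφ0 : ∀ x, φ x ≠ 0 := fun x => norm_pos_iff.1 ((norm_nonneg _).trans_lt (hlt x))
  have hslit : ∀ x, ψ x / φ x ∈ Complex.slitPlane := fun x => by
    have hnorm : ‖ψ x / φ x - 1‖ < 1 := by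
      rw [div_sub_one (hφ0 x), norm_div]
      exact (div_lt_one (norm_pos_iff.2 (hφ0 x))).2 (hlt x)
    simpa using Complex.mem_slitPlane_of_norm_lt_one hnorm
  have hratio : HasContinuousLog fun x => ψ x / φ x :=
    ⟨⟨fun x => Complex.log (ψ x / φ x), (hψc.div hφc hφ0).clog hslit⟩,
      fun x => Complex.exp_log (Complex.slitPlane_ne_zero (hslit x))⟩
  convert hφ.mul hratio using 2 with x
  exact (mul_div_cancel₀ (ψ x) (hφ0 x)).symm

/-- If `exp ∘ L` is odd, then `L (-x) - L x` is an odd function whose exponential is `-1`. -/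
theorem not_of_odd [InvolutiveNeg A] [ContinuousNeg A] [ConnectedSpace A] {φ : A → ℂ}
    (hodd : ∀ x, φ (-x) = -φ x) : ¬ HasContinuousLog φ := by
  rintro ⟨L, hL⟩
  have hexp : ∀ x, Complex.exp (L (-x) - L x) = -1 := fun x => by
    rw [Complex.exp_sub, hL, hodd, ← hL, neg_div, div_self (Complex.exp_ne_zero _)]
  obtain ⟨x⟩ : Nonempty A := inferInstance
  have hconst : L (-x) - L x = L (- -x) - L (-x) :=
    Complex.isCoveringMap_exp.const_of_comp (g := fun x => L (-x) - L x) (by fun_prop)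
      (fun y z => Subtype.ext ((hexp y).trans (hexp z).symm)) x (-x)
  have hzero : L (-x) - L x = 0 := by
    rw [neg_neg] at hconst
    linear_combination (1 / 2 : ℂ) * hconst
  have := hexp x
  rw [hzero, Complex.exp_zero] at this
  norm_num at this

end HasContinuousLog

end ContinuousLog

section Lattice

/-- The inclusion of the deck group `ℤ × ℤ` of the torus in its universal cover. -/
def latticeHom : ℤ × ℤ →+ ℝ × ℝ := (Int.castAddHom ℝ).prodMap (Int.castAddHom ℝ)

/-- The algebraic intersection number of two homology classes of the torus. -/
def intersectionNumber (a b : ℤ × ℤ) : ℤ := a.1 * b.2 - a.2 * b.1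

@[simp] theorem latticeHom_fst (n : ℤ × ℤ) : (latticeHom n).1 = n.1 := rfl

@[simp] theorem latticeHom_snd (n : ℤ × ℤ) : (latticeHom n).2 = n.2 := rfl

theorem latticeHom_injective : Function.Injective latticeHom :=
  Int.cast_injective.prodMap Int.cast_injective

theorem eq_zero_of_norm_latticeHom_lt_one {n : ℤ × ℤ} (h : ‖latticeHom n‖ < 1) : n = 0 := by
  rw [Prod.norm_def, sup_lt_iff, latticeHom_fst, latticeHom_snd, Real.norm_eq_abs, Real.norm_eq_abs]
    at h
  exact Prod.ext (Int.abs_lt_one_iff.1 (by exact_mod_cast h.1))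
    (Int.abs_lt_one_iff.1 (by exact_mod_cast h.2))

theorem map_add_int_of_map_add_one {V : Type*} [AddCommGroup V] {f : ℝ → V} {a : V}
    (hf : ∀ x, f (x + 1) = f x + a) (x : ℝ) (n : ℤ) : f (x + n) = f x + n • a :=
  AddConstMapClass.map_add_int' (AddConstMap.mk f hf : AddConstMap ℝ V 1 a) x n

theorem exists_zsmul_of_intersectionNumber_eq_zero {a b : ℤ × ℤ}
    (h : intersectionNumber a b = 0) : ∃ u ≠ 0, ∃ i j : ℤ, a = i • u ∧ b = j • u := by
  rcases eq_or_ne a 0 with rfl | ha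
  · rcases eq_or_ne b 0 with rfl | hb
    · exact ⟨(1, 0), by simp, 0, 0, by simp, by simp⟩
    · exact ⟨b, hb, 0, 1, by simp, by simp⟩
  have hgcd : Int.gcd a.1 a.2 ≠ 0 := fun h0 => by
    rw [Int.gcd_eq_zero_iff] at h0
    exact ha (Prod.ext h0.1 h0.2)
  obtain ⟨m, n, hmn, hm, hn⟩ := Int.exists_gcd_one (Nat.pos_of_ne_zero hgcd)
  obtain ⟨x, y, hxy⟩ := Int.isCoprime_iff_gcd_eq_one.2 hmn
  have hcross : m * b.2 = n * b.1 := by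
    refine mul_right_cancel₀ (Int.natCast_ne_zero.2 hgcd) ?_
    unfold intersectionNumber at h
    linear_combination h - b.2 * hm + b.1 * hn
  refine ⟨(m, n), fun h0 => ?_, Int.gcd a.1 a.2, x * b.1 + y * b.2, ?_, ?_⟩
  · obtain ⟨rfl, rfl⟩ := Prod.ext_iff.1 h0
    simp at hxy
  · exact Prod.ext (by simp [mul_comm, ← hm]) (by simp [mul_comm, ← hn])
  · refine Prod.ext ?_ ?_ <;> simp only [Prod.smul_mk, smul_eq_mul]
    · linear_combination -b.1 * hxy - y * hcross
    · linear_combination -b.2 * hxy + x * hcross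

theorem intersectionNumber_eq_one_or_neg_one_of_span {a b : ℤ × ℤ}
    (h : ∀ g : ℤ × ℤ, ∃ i j : ℤ, g = i • a + j • b) :
    intersectionNumber a b = 1 ∨ intersectionNumber a b = -1 := by
  obtain ⟨i, j, hij⟩ := h (1, 0)
  obtain ⟨k, l, hkl⟩ := h (0, 1)
  simp only [Prod.ext_iff, Prod.fst_add, Prod.snd_add, Prod.smul_fst, Prod.smul_snd,
    smul_eq_mul] at hij hkl
  refine Int.isUnit_iff.1 (IsUnit.of_mul_eq_one (i * l - j * k) ?_)
  unfold intersectionNumber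
  linear_combination (-k * a.2 - l * b.2) * hij.1 + (k * a.1 + l * b.1) * hij.2 - hkl.2

theorem intersectionNumber_eq_two_of_zsmul_eq {v w n : ℤ × ℤ} {m : ℤ} (hv : IsCoprime v.1 v.2)
    (hm : v + 2 • n = m • w)
    (hn : intersectionNumber (-n) (v + n) = 1 ∨ intersectionNumber (-n) (v + n) = -1) :
    intersectionNumber w v = 2 ∨ intersectionNumber w v = -2 := by
  obtain ⟨hm₁, hm₂⟩ := Prod.ext_iff.1 hm
  simp only [Prod.fst_add, Prod.snd_add, Prod.smul_fst, Prod.smul_snd, two_nsmul, smul_eq_mul]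
    at hm₁ hm₂
  have hmul : m * intersectionNumber w v = -2 * intersectionNumber (-n) (v + n) := by
    simp only [intersectionNumber, Prod.fst_add, Prod.snd_add, Prod.fst_neg, Prod.snd_neg]
    linear_combination v.1 * hm₂ - v.2 * hm₁
  have hm2 : m.natAbs ∣ 2 := by
    rw [← Int.natCast_dvd_natCast, Int.natCast_natAbs, abs_dvd]
    rcases hn with hn | hn <;> rw [hn] at hmul
    · exact ⟨-intersectionNumber w v, by push_cast; linarith⟩
    · exact ⟨intersectionNumber w v, by push_cast; linarith⟩
  have hmodd : m.natAbs ≠ 2 := fun h2 => by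
    obtain ⟨k, rfl⟩ : (2 : ℤ) ∣ m := Int.natAbs_dvd_natAbs.1 h2.symm.dvd
    exact Int.prime_two.not_isUnit (hv.isUnit_of_dvd' ⟨k * w.1 - n.1, by linarith⟩
      ⟨k * w.2 - n.2, by linarith⟩)
  rcases Int.natAbs_eq_iff.1 (((Nat.dvd_prime Nat.prime_two).1 hm2).resolve_right hmodd) with
    rfl | rfl <;> rcases hn with hn | hn <;> rw [hn] at hmul <;> push_cast at hmul <;> omega

variable {a b : ℤ × ℤ}

theorem isCoprime_add_of_isUnit_intersectionNumber (hab : IsUnit (intersectionNumber a b)) :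
    IsCoprime (a + b).1 (a + b).2 := by
  refine ⟨intersectionNumber a b * b.2, -(intersectionNumber a b * b.1), ?_⟩
  rw [← Int.isUnit_mul_self hab]
  simp only [intersectionNumber, Prod.fst_add, Prod.snd_add]
  ring

theorem isUnit_intersectionNumber_neg (hab : IsUnit (intersectionNumber a b)) :
    IsUnit (intersectionNumber a (-b)) := by
  have : intersectionNumber a (-b) = -intersectionNumber a b := by
    simp only [intersectionNumber, Prod.fst_neg, Prod.snd_neg]
    ring
  rwa [this, IsUnit.neg_iff]

theorem exists_eq_add_eq_sub_of_intersectionNumber_eq_two {v w : ℤ × ℤ}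
    (hv : IsCoprime v.1 v.2) (hw : IsCoprime w.1 w.2)
    (h : intersectionNumber w v = 2 ∨ intersectionNumber w v = -2) :
    ∃ a b, IsUnit (intersectionNumber a b) ∧ v = a + b ∧ w = a + -b := by
  have hodd {u : ℤ × ℤ} (hu : IsCoprime u.1 u.2) : ¬ (Even u.1 ∧ Even u.2) := fun ⟨h₁, h₂⟩ =>
    Int.prime_two.not_isUnit (hu.isUnit_of_dvd' h₁.two_dvd h₂.two_dvd)
  have hpar : Even (w.1 * v.2 - w.2 * v.1) := by
    change Even (intersectionNumber w v)
    rcases h with h | h <;> rw [h] <;> decide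
  have hv' := hodd hv
  have hw' := hodd hw
  have hparity : Even (v.1 - w.1) ∧ Even (v.2 - w.2) := by
    simp only [Int.even_sub, Int.even_mul] at hpar ⊢
    tauto
  obtain ⟨⟨x, hx⟩, y, hy⟩ := hparity
  refine ⟨v - (x, y), (x, y), ?_, (sub_add_cancel _ _).symm, Prod.ext ?_ ?_⟩
  · rw [Int.isUnit_iff]
    have hdet : intersectionNumber w v = 2 * intersectionNumber (v - (x, y)) (x, y) := by
      simp only [intersectionNumber, Prod.fst_sub, Prod.snd_sub]
      linear_combination v.1 * hy - v.2 * hx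
    omega
  · simp only [Prod.fst_add, Prod.fst_sub, Prod.fst_neg]
    linarith
  · simp only [Prod.snd_add, Prod.snd_sub, Prod.snd_neg]
    linarith

end Lattice

section PlaneMaps

instance : ConnectedSpace (sphere (0 : ℝ × ℝ) 1) :=
  Subtype.connectedSpace <| isConnected_sphere
    (by rw [← Module.finrank_eq_rank]; norm_num) 0 zero_le_one

theorem smul_ne_zero_of_mem_sphere {r : ℝ} (hr : r ≠ 0) (z : sphere (0 : ℝ × ℝ) 1) :
    r • (z : ℝ × ℝ) ≠ 0 :=
  smul_ne_zero hr (ne_of_mem_sphere z.2 one_ne_zero)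

theorem norm_smul_of_mem_sphere {r : ℝ} (hr : 0 ≤ r) (z : sphere (0 : ℝ × ℝ) 1) :
    ‖r • (z : ℝ × ℝ)‖ = r := by
  rw [norm_smul, mem_sphere_zero_iff_norm.1 z.2, mul_one, Real.norm_of_nonneg hr]

theorem not_hasContinuousLog_linearMap {r : ℝ} (L : ℝ × ℝ →ₗ[ℝ] ℂ) :
    ¬ HasContinuousLog fun z : sphere (0 : ℝ × ℝ) 1 => L (r • (z : ℝ × ℝ)) :=
  HasContinuousLog.not_of_odd fun z => by simp

theorem HasContinuousLog.of_radius_le {φ : ℝ × ℝ → ℂ} (hφ : Continuous φ) {r R : ℝ} (hr : 0 < r)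
    (hrR : r ≤ R) (hne : ∀ z, z ≠ 0 → ‖z‖ ≤ R → φ z ≠ 0)
    (h : HasContinuousLog fun z : sphere (0 : ℝ × ℝ) 1 => φ (R • (z : ℝ × ℝ))) :
    HasContinuousLog fun z : sphere (0 : ℝ × ℝ) 1 => φ (r • (z : ℝ × ℝ)) := by
  let ρ : I → ℝ := fun s => R - s * (R - r)
  have hρ (s : I) : 0 < ρ s ∧ ρ s ≤ R := by
    have hle : s * (R - r) ≤ R - r := mul_le_of_le_one_left (sub_nonneg.2 hrR) s.2.2
    have hnonneg : 0 ≤ s * (R - r) := mul_nonneg s.2.1 (sub_nonneg.2 hrR)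
    exact ⟨by simp only [ρ]; linarith, by simp only [ρ]; linarith⟩
  have h₁ := HasContinuousLog.of_homotopy
    (H := fun p : I × sphere (0 : ℝ × ℝ) 1 => φ (ρ p.1 • (p.2 : ℝ × ℝ)))
    (by fun_prop)
    (fun p => hne _ (smul_ne_zero_of_mem_sphere (hρ p.1).1.ne' p.2)
      ((norm_smul_of_mem_sphere (hρ p.1).1.le p.2).trans_le (hρ p.1).2))
    (by simpa [ρ] using h)
  simpa [ρ] using h₁

/-- On a large circle the map is close to the linear map, which has no continuous logarithm. -/
theorem surjective_of_norm_sub_linearMap_le {φ : ℝ × ℝ → ℂ} (hφ : Continuous φ)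
    {L : ℝ × ℝ →ₗ[ℝ] ℂ} (hL : Function.Injective L) {K : ℝ} (hK : ∀ z, ‖φ z - L z‖ ≤ K) :
    Function.Surjective φ := by
  intro w
  by_contra! hw
  obtain ⟨c, hc, hcL⟩ := L.exists_antilipschitzWith (LinearMap.ker_eq_bot.2 hL)
  have hK₀ : 0 ≤ K := (norm_nonneg _).trans (hK 0)
  set R : ℝ := c * (2 * (K + ‖w‖) + 1)
  have hR : 0 ≤ R := by positivity
  have hlog : HasContinuousLog fun z : ℝ × ℝ => φ z - w :=
    .of_simplyConnected (by fun_prop) fun z => sub_ne_zero.2 (hw z)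
  have hlarge (z : sphere (0 : ℝ × ℝ) 1) : 2 * (K + ‖w‖) < ‖L (R • (z : ℝ × ℝ))‖ := by
    have hbound := hcL.le_mul_dist (R • (z : ℝ × ℝ)) 0
    rw [map_zero, dist_zero_right, dist_zero_right, norm_smul_of_mem_sphere hR] at hbound
    linarith [le_of_mul_le_mul_left hbound (NNReal.coe_pos.2 hc)]
  refine not_hasContinuousLog_linearMap (r := R) L
    ((hlog.comp (f := fun z : sphere (0 : ℝ × ℝ) 1 => R • (z : ℝ × ℝ))
      (by fun_prop)).of_norm_sub_lt
        (L.continuous_of_finiteDimensional.comp (by fun_prop)) fun z => ?_)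
  set y := R • (z : ℝ × ℝ)
  have hnear : ‖L y - (φ y - w)‖ ≤ K + ‖w‖ := calc
    ‖L y - (φ y - w)‖ = ‖w - (φ y - L y)‖ := congrArg _ (by ring)
    _ ≤ ‖w‖ + ‖φ y - L y‖ := norm_sub_le _ _
    _ ≤ K + ‖w‖ := by linarith [hK y]
  change ‖L y - (φ y - w)‖ < ‖φ y - w‖
  linarith [hlarge z, norm_sub_norm_le (L y) (φ y - w)]

/-- The sphere of radius `1/2` is the boundary of a unit square, because `ℝ × ℝ` carries the sup
norm. There `φ (s, t)` is `φ (s, 1/2) * φ (1/2, t)` up to a constant. -/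
theorem hasContinuousLog_of_biperiodic {φ : ℝ × ℝ → ℂ} (hφ : Continuous φ)
    (h₁ : ∀ s t, φ (s + 1, t) = φ (s, t)) (h₂ : ∀ s t, φ (s, t + 1) = φ (s, t))
    (hne : ∀ z, φ z = 0 → ∃ n, z = latticeHom n) :
    HasContinuousLog fun z : sphere (0 : ℝ × ℝ) 1 => φ ((2⁻¹ : ℝ) • (z : ℝ × ℝ)) := by
  have hhalf : ∀ n : ℤ, (2⁻¹ : ℝ) ≠ n := fun n hn => by
    have : (1 : ℤ) = 2 * n := by
      have : (1 : ℝ) = 2 * n := by linarith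
      exact_mod_cast this
    omega
  have hrow : HasContinuousLog fun s : ℝ => φ (s, 2⁻¹) :=
    .of_simplyConnected (by fun_prop) fun s h0 =>
      let ⟨n, hn⟩ := hne _ h0; hhalf n.2 (congrArg Prod.snd hn)
  have hcol : HasContinuousLog fun t : ℝ => φ (2⁻¹, t) :=
    .of_simplyConnected (by fun_prop) fun t h0 =>
      let ⟨n, hn⟩ := hne _ h0; hhalf n.1 (congrArg Prod.fst hn)
  have hcorner : φ (2⁻¹, 2⁻¹) ≠ 0 := fun h0 =>
    let ⟨n, hn⟩ := hne _ h0; hhalf n.1 (congrArg Prod.fst hn)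
  have hneg₁ : ∀ t, φ (-2⁻¹, t) = φ (2⁻¹, t) := fun t => by
    rw [← h₁]; norm_num
  have hneg₂ : ∀ s, φ (s, -2⁻¹) = φ (s, 2⁻¹) := fun s => by
    rw [← h₂]; norm_num
  convert ((hrow.comp (f := fun z : sphere (0 : ℝ × ℝ) 1 => (2⁻¹ : ℝ) * z.1.1)
    (by fun_prop)).mul (hcol.comp (f := fun z : sphere (0 : ℝ × ℝ) 1 => (2⁻¹ : ℝ) * z.1.2)
    (by fun_prop))).mul (.const (inv_ne_zero hcorner)) using 2 with z
  obtain ⟨⟨x, y⟩, hz⟩ := z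
  have hxy : x = 1 ∨ x = -1 ∨ y = 1 ∨ y = -1 := by
    rw [mem_sphere_zero_iff_norm, Prod.norm_def] at hz
    rcases max_choice ‖x‖ ‖y‖ with h | h <;> rw [h, Real.norm_eq_abs] at hz <;>
      rcases eq_or_eq_neg_of_abs_eq hz with h | h <;> simp [h]
  rcases hxy with rfl | rfl | rfl | rfl <;>
    simp [hneg₁, hneg₂, hcorner, mul_right_comm (φ (2⁻¹, 2⁻¹))]

/-- Near the origin `exp w - 1` is close to `w`. -/
theorem exists_hasContinuousLog_of_biperiodic_exp {w : ℝ × ℝ → ℂ} (hw : Continuous w)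
    (hw₀ : w 0 = 0) (h₁ : ∀ s t, Complex.exp (w (s + 1, t)) = Complex.exp (w (s, t)))
    (h₂ : ∀ s t, Complex.exp (w (s, t + 1)) = Complex.exp (w (s, t)))
    (hlattice : ∀ z, Complex.exp (w z) = 1 → ∃ n, z = latticeHom n) {ε : ℝ} (hε : 0 < ε) :
    ∃ r, 0 < r ∧ r ≤ ε ∧ HasContinuousLog fun z : sphere (0 : ℝ × ℝ) 1 => w (r • (z : ℝ × ℝ)) := by
  have hne (z : ℝ × ℝ) (hz : z ≠ 0) (hz' : ‖z‖ ≤ 2⁻¹) : Complex.exp (w z) - 1 ≠ 0 := fun h0 => by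
    obtain ⟨n, rfl⟩ := hlattice z (sub_eq_zero.1 h0)
    exact hz (by rw [eq_zero_of_norm_latticeHom_lt_one (hz'.trans_lt (by norm_num)), map_zero])
  have hlog := hasContinuousLog_of_biperiodic (φ := fun z => Complex.exp (w z) - 1) (by fun_prop)
    (fun s t => by rw [h₁]) (fun s t => by rw [h₂]) fun z hz => hlattice z (sub_eq_zero.1 hz)
  obtain ⟨δ, hδ, hsmall⟩ := Metric.continuous_iff.1 hw 0 2⁻¹ (by norm_num)
  set r := min ε (min 2⁻¹ (δ / 2))
  have hr : 0 < r := lt_min hε (lt_min (by norm_num) (half_pos hδ))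
  have hr_half : r ≤ 2⁻¹ := (min_le_right _ _).trans (min_le_left _ _)
  have hrδ : r < δ := ((min_le_right _ _).trans (min_le_right _ _)).trans_lt (half_lt_self hδ)
  refine ⟨r, hr, min_le_left _ _,
    (HasContinuousLog.of_radius_le (by fun_prop) hr hr_half hne hlog).of_norm_sub_lt
      (by fun_prop) fun z => ?_⟩
  set y := r • (z : ℝ × ℝ)
  have hynorm : ‖y‖ = r := norm_smul_of_mem_sphere hr.le z
  have hwy : ‖w y‖ < 2⁻¹ := by
    simpa [hw₀] using hsmall y (by rwa [dist_zero_right, hynorm])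
  have hwy₀ : 0 < ‖w y‖ := norm_pos_iff.2 fun h0 =>
    hne y (smul_ne_zero_of_mem_sphere hr.ne' z) (hynorm.trans_le hr_half) (by simp [h0])
  have htaylor := Complex.norm_exp_sub_one_sub_id_le (x := w y) (by linarith)
  have hquad : ‖w y‖ ^ 2 < 2⁻¹ * ‖w y‖ := by
    rw [sq]; exact mul_lt_mul_of_pos_right hwy hwy₀
  rw [norm_sub_rev]
  linarith [norm_sub_norm_le (w y) (Complex.exp (w y) - 1),
    norm_sub_rev (w y) (Complex.exp (w y) - 1)]

end PlaneMaps

section Torus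

theorem continuous_torusMk : Continuous torusMk :=
  ((AddCircle.continuous_mk' 1).comp continuous_fst).prodMk
    ((AddCircle.continuous_mk' 1).comp continuous_snd)

theorem unitAddCircle_coe_eq_coe_iff {r s : ℝ} :
    (r : AddCircle (1 : ℝ)) = s ↔ ∃ n : ℤ, s = r + n := by
  rw [eq_comm, ← sub_eq_zero, ← AddCircle.coe_sub, AddCircle.coe_eq_zero_iff]
  simp only [zsmul_eq_mul, mul_one, eq_comm (b := s - r), sub_eq_iff_eq_add']

theorem torusMk_eq_torusMk_iff {x y : ℝ × ℝ} :
    torusMk x = torusMk y ↔ ∃ n, y = x + latticeHom n := by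
  refine Prod.ext_iff.trans ((and_congr unitAddCircle_coe_eq_coe_iff
    unitAddCircle_coe_eq_coe_iff).trans ⟨?_, ?_⟩)
  · rintro ⟨⟨m, hm⟩, n, hn⟩
    exact ⟨(m, n), Prod.ext hm hn⟩
  · rintro ⟨n, rfl⟩
    exact ⟨⟨n.1, rfl⟩, n.2, rfl⟩

@[simp] theorem torusMk_add_latticeHom (x : ℝ × ℝ) (n : ℤ × ℤ) :
    torusMk (x + latticeHom n) = torusMk x :=
  (torusMk_eq_torusMk_iff.2 ⟨n, rfl⟩).symm

/-- `α` is a lift to the plane of a loop of homology class `a` in the torus. -/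
structure IsLoopLift (α : ℝ → ℝ × ℝ) (a : ℤ × ℤ) : Prop where
  continuous : Continuous α
  map_add_one : ∀ x, α (x + 1) = α x + latticeHom a

namespace IsLoopLift

variable {α : ℝ → ℝ × ℝ} {a : ℤ × ℤ}

theorem map_add_int (hα : IsLoopLift α a) (x : ℝ) (n : ℤ) :
    α (x + n) = α x + latticeHom (n • a) := by
  rw [map_zsmul, map_add_int_of_map_add_one hα.map_add_one]

theorem map_int (hα : IsLoopLift α a) (n : ℤ) : α n = α 0 + latticeHom (n • a) := by
  simpa using hα.map_add_int 0 n

theorem torusMk_add_int (hα : IsLoopLift α a) (x : ℝ) (n : ℤ) :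
    torusMk (α (x + n)) = torusMk (α x) := by
  rw [hα.map_add_int, torusMk_add_latticeHom]

theorem exists_norm_sub_smul_le (hα : IsLoopLift α a) : ∃ K, ∀ s, ‖α s - s • latticeHom a‖ ≤ K := by
  have hper : Function.Periodic (fun s => α s - s • latticeHom a) 1 := fun s => by
    simp only [hα.map_add_one, add_smul, one_smul, add_sub_add_right_eq_sub]
  have hcont : Continuous fun s => α s - s • latticeHom a :=
    hα.continuous.sub (by fun_prop)
  obtain ⟨K, hK⟩ := isCompact_Icc.exists_bound_of_continuousOn (hcont.continuousOn (s := Icc 0 1))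
  refine ⟨K, fun s => ?_⟩
  obtain ⟨t, ht, hst⟩ := hper.exists_mem_Ico₀ one_pos s
  exact hst ▸ hK t (Ico_subset_Icc_self ht)

end IsLoopLift

end Torus

section Crossing

/-- Two loops in the torus, given by lifts, which meet only at parameter `0` and cross there: a
local chart `E` carries the two coordinate axes to the two lifts. -/
structure CrossOnce (α β : ℝ → ℝ × ℝ) (a b : ℤ × ℤ) : Prop where
  left : IsLoopLift α a
  right : IsLoopLift β b
  meet : ∀ s t, torusMk (α s) = torusMk (β t) → ∃ n, (s, t) = latticeHom n
  chart : ∃ E : ℝ × ℝ → ℝ × ℝ, Continuous E ∧ ∃ ε > 0, InjOn E (closedBall 0 ε) ∧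
    (∀ s, |s| ≤ ε → α s = E (s, 0)) ∧ ∀ t, |t| ≤ ε → β t = E (0, t)

/-- For `u ∈ [0, 1]` the points `((1 - u/2) s, -(u/2) t)` and `(-(u/2) s, (1 - u/2) t)` differ by
`(s, t)` up to sign, and at `u = 1` they are opposite. -/
theorem not_hasContinuousLog_sub_axes {E : ℝ × ℝ → ℝ × ℝ} (hE : Continuous E) {r : ℝ} (hr : 0 < r)
    (hinj : InjOn E (closedBall 0 r)) {ℓ : ℝ × ℝ →ₗ[ℝ] ℂ} (hℓ : Function.Injective ℓ) :
    ¬ HasContinuousLog fun z : sphere (0 : ℝ × ℝ) 1 =>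
      ℓ (E (r * z.1.1, 0) - E (0, r * z.1.2)) := by
  intro hlog
  let P : I → ℝ × ℝ → ℝ × ℝ := fun u z => ((1 - u / 2) * (r * z.1), -(u / 2 * (r * z.2)))
  let Q : I → ℝ × ℝ → ℝ × ℝ := fun u z => (-(u / 2 * (r * z.1)), (1 - u / 2) * (r * z.2))
  have hmul (c x : ℝ) (hc : |c| ≤ 1) (hx : |x| ≤ 1) : |c * (r * x)| ≤ r := by
    rw [abs_mul, abs_mul, abs_of_pos hr]
    exact (mul_le_of_le_one_left (by positivity) hc).trans (mul_le_of_le_one_right hr.le hx)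
  have hball (u : I) (z : sphere (0 : ℝ × ℝ) 1) :
      P u z ∈ closedBall 0 r ∧ Q u z ∈ closedBall 0 r := by
    have hz := (mem_sphere_zero_iff_norm.1 z.2).le
    rw [Prod.norm_def, sup_le_iff] at hz
    have hu : |(u : ℝ) / 2| ≤ 1 := by rw [abs_le]; constructor <;> linarith [u.2.1, u.2.2]
    have hu' : |1 - (u : ℝ) / 2| ≤ 1 := by rw [abs_le]; constructor <;> linarith [u.2.1, u.2.2]
    simp only [mem_closedBall_zero_iff, Prod.norm_def, sup_le_iff, P, Q, norm_neg]
    exact ⟨⟨hmul _ _ hu' hz.1, hmul _ _ hu hz.2⟩, hmul _ _ hu hz.1, hmul _ _ hu' hz.2⟩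
  have hne (u : I) (z : sphere (0 : ℝ × ℝ) 1) : P u z ≠ Q u z := fun h => by
    obtain ⟨h₁, h₂⟩ := Prod.ext_iff.1 h
    simp only [P, Q] at h₁ h₂
    refine smul_ne_zero_of_mem_sphere hr.ne' z (Prod.ext ?_ ?_) <;>
      simp only [Prod.smul_fst, Prod.smul_snd, smul_eq_mul, Prod.fst_zero, Prod.snd_zero] <;>
      linarith
  have hcont := ℓ.continuous_of_finiteDimensional
  have hhalf := HasContinuousLog.of_homotopy
    (H := fun p : I × sphere (0 : ℝ × ℝ) 1 => ℓ (E (P p.1 p.2) - E (Q p.1 p.2)))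
    (by fun_prop)
    (fun p h0 => hne p.1 p.2 <| hinj (hball _ _).1 (hball _ _).2 <| sub_eq_zero.1 <|
      hℓ (h0.trans ℓ.map_zero.symm))
    (by simpa [P, Q] using hlog)
  refine HasContinuousLog.not_of_odd (fun z => ?_) hhalf
  have hsymm : P 1 (-z : ℝ × ℝ) = Q 1 z ∧ Q 1 (-z : ℝ × ℝ) = P 1 z := by
    constructor <;> ext <;> simp only [P, Q, Prod.fst_neg, Prod.snd_neg, Icc.coe_one] <;> ring
  rw [← map_neg, neg_sub]
  change ℓ (E (P 1 (-z : ℝ × ℝ)) - E (Q 1 (-z : ℝ × ℝ))) = _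
  rw [hsymm.1, hsymm.2]

namespace CrossOnce

variable {α β : ℝ → ℝ × ℝ} {a b : ℤ × ℤ}

theorem map_zero_eq (h : CrossOnce α β a b) : α 0 = β 0 := by
  obtain ⟨E, -, ε, hε, -, hα, hβ⟩ := h.chart
  rw [hα 0 (by simpa using hε.le), hβ 0 (by simpa using hε.le)]

theorem exists_latticeHom_of_sub_eq (h : CrossOnce α β a b) {s t : ℝ} {g : ℤ × ℤ}
    (hst : α s - β t = latticeHom g) : ∃ n, (s, t) = latticeHom n :=
  h.meet s t (torusMk_eq_torusMk_iff.2 ⟨-g, by rw [map_neg, ← hst]; abel⟩)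

theorem intersectionNumber_of_ne_zero (h : CrossOnce α β a b) (hab : intersectionNumber a b ≠ 0) :
    intersectionNumber a b = 1 ∨ intersectionNumber a b = -1 := by
  obtain ⟨K₁, hK₁⟩ := h.left.exists_norm_sub_smul_le
  obtain ⟨K₂, hK₂⟩ := h.right.exists_norm_sub_smul_le
  let κ := Complex.equivRealProdCLM.symm
  let L : ℝ × ℝ →ₗ[ℝ] ℂ := (κ : ℝ × ℝ →ₗ[ℝ] ℂ) ∘ₗ
    ((LinearMap.fst ℝ ℝ ℝ).smulRight (latticeHom a) -
      (LinearMap.snd ℝ ℝ ℝ).smulRight (latticeHom b))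
  have hL (z : ℝ × ℝ) : L z = κ (z.1 • latticeHom a - z.2 • latticeHom b) := rfl
  have hLinj : Function.Injective L := by
    refine (injective_iff_map_eq_zero L).2 fun z hz => ?_
    rw [hL, EmbeddingLike.map_eq_zero_iff, Prod.ext_iff] at hz
    obtain ⟨h₁, h₂⟩ := hz
    simp only [Prod.fst_sub, Prod.snd_sub, Prod.smul_fst, Prod.smul_snd, latticeHom_fst,
      latticeHom_snd, smul_eq_mul, Prod.fst_zero, Prod.snd_zero] at h₁ h₂
    have hdet : (a.1 * b.2 - a.2 * b.1 : ℝ) ≠ 0 := by exact_mod_cast hab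
    refine Prod.ext ((mul_eq_zero_iff_right hdet).1 ?_) ((mul_eq_zero_iff_right hdet).1 ?_)
    · linear_combination b.2 * h₁ - b.1 * h₂
    · linear_combination a.2 * h₁ - a.1 * h₂
  have hsurj : Function.Surjective fun z : ℝ × ℝ => κ (α z.1 - β z.2) := by
    have := h.left.continuous
    have := h.right.continuous
    refine surjective_of_norm_sub_linearMap_le (by fun_prop) hLinj
      (K := ‖(κ : ℝ × ℝ →L[ℝ] ℂ)‖ * (K₁ + K₂)) fun z => ?_
    rw [hL, ← map_sub, sub_sub_sub_comm]
    exact ((κ : ℝ × ℝ →L[ℝ] ℂ).le_opNorm _).trans <| mul_le_mul_of_nonneg_left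
      ((norm_sub_le _ _).trans (add_le_add (hK₁ _) (hK₂ _))) (norm_nonneg _)
  refine intersectionNumber_eq_one_or_neg_one_of_span fun g => ?_
  obtain ⟨⟨s, t⟩, hst⟩ := hsurj (κ (latticeHom g))
  have hg : α s - β t = latticeHom g := κ.injective hst
  obtain ⟨n, hn⟩ := h.exists_latticeHom_of_sub_eq hg
  obtain ⟨rfl, rfl⟩ := Prod.ext_iff.1 hn
  refine ⟨n.1, -n.2, latticeHom_injective ?_⟩
  rw [← hg, latticeHom_fst, latticeHom_snd, h.left.map_int, h.right.map_int, h.map_zero_eq, map_add,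
    neg_smul, map_neg]
  abel

/-- After a linear change of coordinates `ℓ` taking the common direction of `a` and `b` to `2πi`,
the function `exp (ℓ (α s - β t)) - 1` is biperiodic and vanishes only on the lattice. -/
theorem intersectionNumber_ne_zero (h : CrossOnce α β a b) : intersectionNumber a b ≠ 0 := by
  intro hab
  obtain ⟨u, hu, i, j, rfl, rfl⟩ := exists_zsmul_of_intersectionNumber_eq_zero hab
  let κ := Complex.equivRealProdCLM.symm
  have hκu : κ (latticeHom u) ≠ 0 := by
    rw [Ne, EmbeddingLike.map_eq_zero_iff, map_eq_zero_iff _ latticeHom_injective]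
    exact hu
  let c : ℂ := 2 * Real.pi * Complex.I / κ (latticeHom u)
  have hc : c ≠ 0 := div_ne_zero Complex.two_pi_I_ne_zero hκu
  let ℓ : ℝ × ℝ →ₗ[ℝ] ℂ := LinearMap.mulLeft ℝ c ∘ₗ (κ : ℝ × ℝ →ₗ[ℝ] ℂ)
  have hℓ : Function.Injective ℓ := (mul_right_injective₀ hc).comp κ.injective
  have hℓu (k : ℤ) : ℓ (latticeHom (k • u)) = k * (2 * Real.pi * Complex.I) := by
    change c * κ (latticeHom (k • u)) = _
    rw [map_zsmul, map_zsmul, zsmul_eq_mul, mul_left_comm, div_mul_cancel₀ _ hκu]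
  let w : ℝ × ℝ → ℂ := fun z => ℓ (α z.1 - β z.2)
  have hw : Continuous w := by
    have := h.left.continuous
    have := h.right.continuous
    have := ℓ.continuous_of_finiteDimensional
    fun_prop
  have hperiod (k : ℤ) : Complex.exp (ℓ (latticeHom (k • u))) = 1 :=
    Complex.exp_eq_one_iff.2 ⟨k, hℓu k⟩
  obtain ⟨E, hE, ε, hε, hinj, hα, hβ⟩ := h.chart
  obtain ⟨r, hr, hrε, hlog⟩ := exists_hasContinuousLog_of_biperiodic_exp hw
    (by simp only [w, Prod.fst_zero, Prod.snd_zero, h.map_zero_eq, sub_self, map_zero])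
    (fun s t => by
      simp only [w, h.left.map_add_one, add_sub_right_comm, map_add, Complex.exp_add, hperiod,
        mul_one])
    (fun s t => by
      simp only [w, h.right.map_add_one, map_sub, map_add, Complex.exp_sub, Complex.exp_add,
        hperiod, mul_one])
    (fun z hz => by
      obtain ⟨k, hk⟩ := Complex.exp_eq_one_iff.1 hz
      exact h.exists_latticeHom_of_sub_eq (hℓ (hk.trans (hℓu k).symm))) hε
  refine not_hasContinuousLog_sub_axes hE hr (hinj.mono (closedBall_subset_closedBall hrε)) hℓ ?_
  have hcoord (z : sphere (0 : ℝ × ℝ) 1) : |r * z.1.1| ≤ ε ∧ |r * z.1.2| ≤ ε :=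
    sup_le_iff.1 ((norm_smul_of_mem_sphere hr.le z).trans_le hrε)
  simpa only [w, Prod.smul_fst, Prod.smul_snd, smul_eq_mul, hα _ (hcoord _).1, hβ _ (hcoord _).2]
    using hlog

theorem intersectionNumber_eq (h : CrossOnce α β a b) :
    intersectionNumber a b = 1 ∨ intersectionNumber a b = -1 :=
  h.intersectionNumber_of_ne_zero h.intersectionNumber_ne_zero

end CrossOnce

end Crossing

section LoopLift

/-- The extension to the line of a path `γ` on `[0, 1]` with `γ 1 = γ 0 + latticeHom a`. -/
noncomputable def loopLift (γ : ℝ → ℝ × ℝ) (a : ℤ × ℤ) (s : ℝ) : ℝ × ℝ :=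
  γ (Int.fract s) + latticeHom (⌊s⌋ • a)

variable {γ δ : ℝ → ℝ × ℝ} {a b : ℤ × ℤ}

theorem torusMk_loopLift (s : ℝ) : torusMk (loopLift γ a s) = torusMk (γ (Int.fract s)) :=
  torusMk_add_latticeHom _ _

theorem loopLift_of_mem_Ico {s : ℝ} (hs : s ∈ Ico (0 : ℝ) 1) : loopLift γ a s = γ s := by
  rw [loopLift, Int.fract_eq_self.2 hs, Int.floor_eq_zero_iff.2 hs, zero_smul, map_zero, add_zero]

theorem isLoopLift_loopLift (hγ : Continuous γ) (h : γ 1 = γ 0 + latticeHom a) :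
    IsLoopLift (loopLift γ a) a where
  continuous := by
    have hrepr (s : ℝ) : loopLift γ a s =
        (γ (Int.fract s) - Int.fract s • latticeHom a) + s • latticeHom a := by
      rw [loopLift, map_zsmul, ← Int.cast_smul_eq_zsmul ℝ, ← Int.self_sub_fract, sub_smul]
      abel
    have hcont : ContinuousOn (fun x : ℝ => γ x - x • latticeHom a) (Icc 0 1) := by fun_prop
    exact ((hcont.comp_fract'' (by simp [h])).add (by fun_prop)).congr fun s => (hrepr s).symm
  map_add_one s := by
    rw [loopLift, loopLift, Int.fract_add_one, Int.floor_add_one, add_smul, one_smul, map_add,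
      add_assoc]

theorem IsLoopLift.comp_add_const {α : ℝ → ℝ × ℝ} (hα : IsLoopLift α a) (x : ℝ) :
    IsLoopLift (fun s => α (s + x)) a where
  continuous := hα.continuous.comp (by fun_prop)
  map_add_one s := by rw [add_right_comm, hα.map_add_one]

theorem crossOnce_loopLift (hγ : Continuous γ) (hδ : Continuous δ)
    (hγ₁ : γ 1 = γ 0 + latticeHom a) (hδ₁ : δ 1 = δ 0 + latticeHom b) {x₀ : ℝ}
    (hmeet : ∀ s ∈ Ico (0 : ℝ) 1, ∀ t ∈ Ico (0 : ℝ) 1, torusMk (γ s) = torusMk (δ t) →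
      s = x₀ ∧ t = x₀)
    {E : ℝ × ℝ → ℝ × ℝ} (hE : Continuous E) {ε : ℝ} (hε : 0 < ε) (hinj : InjOn E (closedBall 0 ε))
    (hball : Icc (x₀ - ε) (x₀ + ε) ⊆ Ico 0 1) (hEγ : ∀ s, |s| ≤ ε → γ (s + x₀) = E (s, 0))
    (hEδ : ∀ t, |t| ≤ ε → δ (t + x₀) = E (0, t)) :
    CrossOnce (fun s => loopLift γ a (s + x₀)) (fun t => loopLift δ b (t + x₀)) a b where
  left := (isLoopLift_loopLift hγ hγ₁).comp_add_const x₀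
  right := (isLoopLift_loopLift hδ hδ₁).comp_add_const x₀
  meet s t h := by
    rw [torusMk_loopLift, torusMk_loopLift] at h
    obtain ⟨hs, ht⟩ := hmeet _ ⟨Int.fract_nonneg _, Int.fract_lt_one _⟩ _
      ⟨Int.fract_nonneg _, Int.fract_lt_one _⟩ h
    refine ⟨(⌊s + x₀⌋, ⌊t + x₀⌋), Prod.ext ?_ ?_⟩
    · linarith [latticeHom_fst (⌊s + x₀⌋, ⌊t + x₀⌋), Int.floor_add_fract (s + x₀)]
    · linarith [latticeHom_snd (⌊s + x₀⌋, ⌊t + x₀⌋), Int.floor_add_fract (t + x₀)]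
  chart := by
    have hmem {s : ℝ} (hs : |s| ≤ ε) : s + x₀ ∈ Ico (0 : ℝ) 1 := by
      rw [abs_le] at hs
      exact hball ⟨by linarith, by linarith⟩
    exact ⟨E, hE, ε, hε, hinj, fun s hs => (loopLift_of_mem_Ico (hmem hs)).trans (hEγ s hs),
      fun t ht => (loopLift_of_mem_Ico (hmem ht)).trans (hEδ t ht)⟩

end LoopLift

section Curve

instance : T2Space Torus := inferInstanceAs (T2Space (AddCircle (1 : ℝ) × AddCircle (1 : ℝ)))

theorem isEmbedding_latticeHom : Topology.IsEmbedding latticeHom :=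
  Int.isClosedEmbedding_coe_real.isEmbedding.prodMap Int.isClosedEmbedding_coe_real.isEmbedding

variable {A : Type*} [TopologicalSpace A]

theorem exists_eq_add_latticeHom [PreconnectedSpace A] [Nonempty A] {φ ψ : A → ℝ × ℝ}
    (hφ : Continuous φ) (hψ : Continuous ψ) (h : ∀ x, torusMk (φ x) = torusMk (ψ x)) :
    ∃ n, ∀ x, ψ x = φ x + latticeHom n := by
  choose N hN using fun x => torusMk_eq_torusMk_iff.1 (h x)
  have hNc : Continuous N := isEmbedding_latticeHom.continuous_iff.2 <|
    (hψ.sub hφ).congr fun x => sub_eq_of_eq_add' (hN x)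
  obtain ⟨x₀⟩ := ‹Nonempty A›
  exact ⟨N x₀, fun x => PreconnectedSpace.constant ‹_› hNc (x := x) (y := x₀) ▸ hN x⟩

theorem exists_lift_addCircle [SimplyConnectedSpace A] [LocallyPathConnectedSpace A] {p : ℝ}
    {ψ : A → AddCircle p} (hψ : Continuous ψ) :
    ∃ L : A → ℝ, Continuous L ∧ ∀ x, (L x : AddCircle p) = ψ x := by
  obtain ⟨x₀⟩ : Nonempty A := inferInstance
  obtain ⟨y, hy⟩ := QuotientAddGroup.mk_surjective (ψ x₀)
  obtain ⟨L, ⟨-, hL⟩, -⟩ :=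
    (AddCircle.isCoveringMap_coe p).existsUnique_continuousMap_lifts ⟨ψ, hψ⟩ x₀ y hy
  exact ⟨L, L.continuous, congrFun hL⟩

theorem exists_lift_torusMk [SimplyConnectedSpace A] [LocallyPathConnectedSpace A] {φ : A → Torus}
    (hφ : Continuous φ) : ∃ E : A → ℝ × ℝ, Continuous E ∧ ∀ x, torusMk (E x) = φ x := by
  obtain ⟨L₁, hL₁c, hL₁⟩ := exists_lift_addCircle (continuous_fst.comp hφ)
  obtain ⟨L₂, hL₂c, hL₂⟩ := exists_lift_addCircle (continuous_snd.comp hφ)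
  exact ⟨fun x => (L₁ x, L₂ x), hL₁c.prodMk hL₂c, fun x => Prod.ext (hL₁ x) (hL₂ x)⟩

namespace TorusCurve

variable (C : TorusCurve)

/-- The homology class of a curve. -/
def homologyClass : ℤ × ℤ := (C.p, C.q)

theorem isLoopLift : IsLoopLift C.f C.homologyClass := ⟨C.cont, C.per⟩

theorem eq_add_of_map_eq {x y : ℝ} {n : ℤ × ℤ} (h : C.f y = C.f x + latticeHom n) :
    ∃ k : ℤ, y = x + k ∧ n = k • C.homologyClass := by
  obtain ⟨k, rfl⟩ := C.inj x y (torusMk_eq_torusMk_iff.2 ⟨n, h⟩)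
  rw [C.isLoopLift.map_add_int, add_right_inj] at h
  exact ⟨k, rfl, (latticeHom_injective h).symm⟩

theorem exists_homeomorph :
    ∃ h : AddCircle (1 : ℝ) ≃ₜ C.image, ∀ x : ℝ, (h x : Torus) = torusMk (C.f x) := by
  have hper : Function.Periodic (fun x => torusMk (C.f x)) 1 := fun x => by
    simpa using C.isLoopLift.torusMk_add_int x 1
  have hcont : Continuous hper.lift := continuous_quot_lift _ (continuous_torusMk.comp C.cont)
  have hinj : Function.Injective hper.lift := by
    rintro ⟨x⟩ ⟨y⟩ hxy
    exact unitAddCircle_coe_eq_coe_iff.2 (C.inj x y hxy)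
  have hrange : range hper.lift = C.image :=
    (QuotientAddGroup.mk_surjective.range_comp hper.lift).symm
  exact ⟨(hcont.isClosedEmbedding hinj).isEmbedding.toHomeomorph.trans (Homeomorph.setCongr hrange),
    fun x => rfl⟩

variable {C}

theorem exists_lift [SimplyConnectedSpace A] [LocallyPathConnectedSpace A] {φ : A → ℝ × ℝ}
    (hφ : Continuous φ) (h : ∀ x, torusMk (φ x) ∈ C.image) :
    ∃ g : A → ℝ, Continuous g ∧ ∃ n, ∀ x, φ x = C.f (g x) + latticeHom n := by
  obtain ⟨κ, hκ⟩ := C.exists_homeomorph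
  obtain ⟨g, hg, hgκ⟩ := exists_lift_addCircle (ψ := fun x => κ.symm ⟨torusMk (φ x), h x⟩)
    (κ.symm.continuous.comp ((continuous_torusMk.comp hφ).subtype_mk _))
  refine ⟨g, hg, exists_eq_add_latticeHom (C.cont.comp hg) hφ fun x => ?_⟩
  rw [← hκ, hgκ, κ.apply_symm_apply]

theorem exists_side_lift {E : ℝ × ℝ → ℝ × ℝ} (hE : Continuous E) {x : ℝ}
    (h : ∀ y ∈ Icc (0 : ℝ) 1, torusMk (E (x, y)) ∈ C.image) :
    ∃ g : ℝ → ℝ, Continuous g ∧ ∃ n, ∀ y ∈ Icc (0 : ℝ) 1, E (x, y) = C.f (g y) + latticeHom n := by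
  obtain ⟨g, hg, n, hn⟩ := C.exists_lift
    (φ := fun y : ℝ => E (x, projIcc 0 1 zero_le_one y)) (by fun_prop) fun y => h _ (projIcc ..).2
  refine ⟨g, hg, n, fun y hy => ?_⟩
  rw [← hn, projIcc_of_mem _ hy]

theorem exists_zsmul_of_joinedIn {x : ℝ × ℝ} {n : ℤ × ℤ}
    (h : JoinedIn (torusMk ⁻¹' C.image) x (x + latticeHom n)) :
    ∃ k : ℤ, n = k • C.homologyClass := by
  obtain ⟨γ, hγ⟩ := h
  obtain ⟨g, -, m, hm⟩ := C.exists_lift γ.extend.continuous fun t => hγ (projIcc 0 1 zero_le_one t)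
  have h₀ := hm 0
  have h₁ := hm 1
  rw [γ.extend_zero] at h₀
  rw [γ.extend_one, h₀, add_right_comm, add_left_inj] at h₁
  obtain ⟨k, -, hk⟩ := C.eq_add_of_map_eq h₁.symm
  exact ⟨k, hk⟩

end TorusCurve

theorem joinedIn_of_image_uIcc_subset {f : ℝ → A} (hf : Continuous f) {s : Set A} {u v : ℝ}
    (h : f '' uIcc u v ⊆ s) : JoinedIn s (f u) (f v) :=
  ((JoinedIn.of_segment_subset (segment_eq_uIcc u v).subset).map hf).mono h

theorem joinedIn_add_latticeHom {S : Set Torus} {x y : ℝ × ℝ}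
    (h : JoinedIn (torusMk ⁻¹' S) x y) (n : ℤ × ℤ) :
    JoinedIn (torusMk ⁻¹' S) (x + latticeHom n) (y + latticeHom n) := by
  refine (h.map (continuous_add_const (latticeHom n))).mono ?_
  rintro _ ⟨z, hz, rfl⟩
  rwa [mem_preimage, torusMk_add_latticeHom]

end Curve

section SurgeryBand

/-- The data of a surgery lifted to the plane: a band `E` whose sides `x = 0` and `x = 1` run along
the arcs of `C` with parameters `g₀` and `g₁`, the latter on the lift of `C` translated by `shift`.
The lifts are chosen so that the `g₁`-arc comes after the `g₀`-arc and before its translate by one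
period. -/
structure SurgeryBand (C C' : TorusCurve) where
  E : ℝ × ℝ → ℝ × ℝ
  g₀ : ℝ → ℝ
  g₁ : ℝ → ℝ
  shift : ℤ × ℤ
  continuous_E : Continuous E
  continuous_g₀ : Continuous g₀
  continuous_g₁ : Continuous g₁
  injOn : InjOn (fun z => torusMk (E z)) (Icc 0 1 ×ˢ Icc 0 1)
  side_zero : ∀ y ∈ Icc (0 : ℝ) 1, E (0, y) = C.f (g₀ y)
  side_one : ∀ y ∈ Icc (0 : ℝ) 1, E (1, y) = C.f (g₁ y) + latticeHom shift
  lt : ∀ y ∈ Icc (0 : ℝ) 1, ∀ y' ∈ Icc (0 : ℝ) 1, g₀ y < g₁ y' ∧ g₁ y' < g₀ y + 1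
  meet : ∀ z ∈ Icc (0 : ℝ) 1 ×ˢ Icc (0 : ℝ) 1, torusMk (E z) ∈ C.image → z.1 = 0 ∨ z.1 = 1
  image_eq : C'.image = (C.image \ (fun z => torusMk (E z)) '' ({0, 1} ×ˢ Icc 0 1)) ∪
    (fun z => torusMk (E z)) '' (Icc 0 1 ×ˢ {0, 1})

theorem exists_int_lt_lt_of_forall_ne_int {A : Type*} [TopologicalSpace A] [PreconnectedSpace A]
    [Nonempty A] {d : A → ℝ} (hd : Continuous d) (h : ∀ x (k : ℤ), d x ≠ k) :
    ∃ k : ℤ, ∀ x, k < d x ∧ d x < k + 1 := by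
  obtain ⟨x₀⟩ := ‹Nonempty A›
  have hord : (range d).OrdConnected := (isPreconnected_range hd).ordConnected
  have havoid (k : ℤ) : (k : ℝ) ∉ range d := fun ⟨x, hx⟩ => h x k hx
  refine ⟨⌊d x₀⌋, fun x => ⟨lt_of_not_ge fun hle => ?_, lt_of_not_ge fun hle => ?_⟩⟩
  · exact havoid _ (hord.out (mem_range_self x) (mem_range_self x₀) ⟨hle, Int.floor_le _⟩)
  · exact havoid (⌊d x₀⌋ + 1) (hord.out (mem_range_self x₀) (mem_range_self x)
      (by push_cast; exact ⟨(Int.lt_floor_add_one _).le, hle⟩))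

theorem TorusCurve.exists_int_lt_lt_of_torusMk_ne {C : TorusCurve} {g₀ g₁ : ℝ → ℝ}
    (hg₀ : Continuous g₀) (hg₁ : Continuous g₁) (h : ∀ y ∈ Icc (0 : ℝ) 1, ∀ y' ∈ Icc (0 : ℝ) 1,
      torusMk (C.f (g₀ y)) ≠ torusMk (C.f (g₁ y'))) :
    ∃ k : ℤ, ∀ y ∈ Icc (0 : ℝ) 1, ∀ y' ∈ Icc (0 : ℝ) 1,
      g₀ y < g₁ y' - k ∧ g₁ y' - k < g₀ y + 1 := by
  obtain ⟨k, hk⟩ := exists_int_lt_lt_of_forall_ne_int (d := fun z : I × I => g₁ z.2 - g₀ z.1)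
    (by fun_prop) fun z k hzk => h z.1 z.1.2 z.2 z.2.2 (by
      rw [← C.isLoopLift.torusMk_add_int (g₀ z.1) k, ← hzk, add_sub_cancel])
  refine ⟨k, fun y hy y' hy' => ?_⟩
  have := hk (⟨y, hy⟩, ⟨y', hy'⟩)
  constructor <;> linarith

theorem pair_zero_one_subset_Icc : ({0, 1} : Set ℝ) ⊆ Icc 0 1 :=
  pair_subset unitInterval.zero_mem unitInterval.one_mem

theorem ObtainedBySurgery.nonempty_surgeryBand {C C' : TorusCurve}
    (h : ObtainedBySurgery C.image C'.image) : Nonempty (SurgeryBand C C') := by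
  obtain ⟨e, he, hinj, hmeet, himage⟩ := h
  obtain ⟨E, hE, hEe⟩ := exists_lift_torusMk he
  have hside (x : ℝ) (hx : x ∈ ({0, 1} : Set ℝ)) (y : ℝ) (hy : y ∈ Icc (0 : ℝ) 1) :
      torusMk (E (x, y)) ∈ C.image := by
    rw [hEe]
    exact (hmeet.symm.subset (mem_image_of_mem e (mk_mem_prod hx hy))).1
  obtain ⟨g₀, hg₀, n₀, hn₀⟩ := TorusCurve.exists_side_lift hE (hside 0 (by simp))
  obtain ⟨g₁, hg₁, n₁, hn₁⟩ := TorusCurve.exists_side_lift hE (hside 1 (by simp))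
  obtain ⟨k, hk⟩ := C.exists_int_lt_lt_of_torusMk_ne hg₀ hg₁ fun y hy y' hy' hsame =>
    zero_ne_one <| congrArg Prod.fst <|
      hinj (mk_mem_prod unitInterval.zero_mem hy) (mk_mem_prod unitInterval.one_mem hy') (by
        rw [← hEe, ← hEe, hn₀ y hy, hn₁ y' hy', torusMk_add_latticeHom, torusMk_add_latticeHom,
          hsame])
  have he' : (fun z => torusMk (E z + latticeHom (-n₀))) = e := funext fun z => by
    rw [torusMk_add_latticeHom, hEe]
  exact ⟨{
    E := fun z => E z + latticeHom (-n₀)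
    g₀ := g₀
    g₁ := fun y => g₁ y - k
    shift := n₁ - n₀ + k • C.homologyClass
    continuous_E := by fun_prop
    continuous_g₀ := hg₀
    continuous_g₁ := by fun_prop
    injOn := he' ▸ hinj
    side_zero := fun y hy => by rw [hn₀ y hy, map_neg, add_neg_cancel_right]
    side_one := fun y hy => by
      have := C.isLoopLift.map_add_int (g₁ y - k) k
      rw [sub_add_cancel] at this
      rw [hn₁ y hy, this, map_add, map_sub, map_neg]
      abel
    lt := hk
    meet := fun z hz hzC => by
      rw [torusMk_add_latticeHom, hEe] at hzC
      obtain ⟨z', hz', hzz'⟩ := hmeet.subset ⟨hzC, mem_image_of_mem e hz⟩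
      rw [← hinj ⟨pair_zero_one_subset_Icc hz'.1, hz'.2⟩ hz hzz']
      exact hz'.1
    image_eq := he' ▸ himage }⟩

namespace SurgeryBand

variable {C C' : TorusCurve} (B : SurgeryBand C C')

/-- The same band parametrized with the second coordinate reversed. -/
def flip : SurgeryBand C C' where
  E z := B.E (z.1, 1 - z.2)
  g₀ y := B.g₀ (1 - y)
  g₁ y := B.g₁ (1 - y)
  shift := B.shift
  continuous_E := by have := B.continuous_E; fun_prop
  continuous_g₀ := by have := B.continuous_g₀; fun_prop
  continuous_g₁ := by have := B.continuous_g₁; fun_prop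
  injOn z hz z' hz' h := by
    have : ((z.1, 1 - z.2) : ℝ × ℝ) = (z'.1, 1 - z'.2) :=
      B.injOn (mk_mem_prod hz.1 (Icc.one_sub_mem hz.2))
        (mk_mem_prod hz'.1 (Icc.one_sub_mem hz'.2)) h
    exact Prod.ext (Prod.ext_iff.1 this).1 (sub_right_injective (Prod.ext_iff.1 this).2)
  side_zero y hy := B.side_zero _ (Icc.one_sub_mem hy)
  side_one y hy := B.side_one _ (Icc.one_sub_mem hy)
  lt y hy y' hy' := B.lt _ (Icc.one_sub_mem hy) _ (Icc.one_sub_mem hy')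
  meet z hz := B.meet _ ⟨hz.1, Icc.one_sub_mem hz.2⟩
  image_eq := by
    have hflip (S T : Set ℝ) : (fun z : ℝ × ℝ => torusMk (B.E (z.1, 1 - z.2))) '' (S ×ˢ T) =
        (fun z => torusMk (B.E z)) '' (S ×ˢ ((fun y => 1 - y) '' T)) := by
      rw [← image_id S, ← prodMap_image_prod, image_id, image_image]
      rfl
    rw [hflip, hflip, image_const_sub_Icc, image_pair, sub_self, sub_zero, pair_comm 1]
    exact B.image_eq

theorem param_of_torusMk_eq {u : ℝ} {z : ℝ × ℝ} (hz : z ∈ Icc (0 : ℝ) 1 ×ˢ Icc (0 : ℝ) 1)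
    (h : torusMk (C.f u) = torusMk (B.E z)) :
    (z.1 = 0 ∧ ∃ k : ℤ, u = B.g₀ z.2 + k) ∨ (z.1 = 1 ∧ ∃ k : ℤ, u = B.g₁ z.2 + k) := by
  obtain ⟨x, y⟩ := z
  rcases B.meet _ hz (h ▸ mem_range_self u) with rfl | rfl
  · rw [B.side_zero y hz.2] at h
    exact .inl ⟨rfl, C.inj _ _ h.symm⟩
  · rw [B.side_one y hz.2, torusMk_add_latticeHom] at h
    exact .inr ⟨rfl, C.inj _ _ h.symm⟩

theorem torusMk_g₀ {y : ℝ} (hy : y ∈ Icc (0 : ℝ) 1) :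
    torusMk (C.f (B.g₀ y)) = torusMk (B.E (0, y)) := by
  rw [B.side_zero y hy]

theorem torusMk_g₁ {y : ℝ} (hy : y ∈ Icc (0 : ℝ) 1) :
    torusMk (C.f (B.g₁ y)) = torusMk (B.E (1, y)) := by
  rw [B.side_one y hy, torusMk_add_latticeHom]

theorem injOn_g₀ : InjOn B.g₀ (Icc 0 1) := fun y hy y' hy' h =>
  congrArg Prod.snd <| B.injOn (mk_mem_prod unitInterval.zero_mem hy)
    (mk_mem_prod unitInterval.zero_mem hy') (by
      change torusMk _ = torusMk _
      rw [← B.torusMk_g₀ hy, ← B.torusMk_g₀ hy', h])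

theorem injOn_g₁ : InjOn B.g₁ (Icc 0 1) := fun y hy y' hy' h =>
  congrArg Prod.snd <| B.injOn (mk_mem_prod unitInterval.one_mem hy)
    (mk_mem_prod unitInterval.one_mem hy') (by
      change torusMk _ = torusMk _
      rw [← B.torusMk_g₁ hy, ← B.torusMk_g₁ hy', h])

theorem torusMk_E_mem_image {z : ℝ × ℝ} (hz : z ∈ Icc (0 : ℝ) 1 ×ˢ ({0, 1} : Set ℝ)) :
    torusMk (B.E z) ∈ C'.image :=
  B.image_eq ▸ .inr (mem_image_of_mem _ hz)

theorem torusMk_f_mem_image {u : ℝ} (h : ∀ z ∈ Icc (0 : ℝ) 1 ×ˢ Icc (0 : ℝ) 1,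
    torusMk (C.f u) = torusMk (B.E z) → z.2 ∈ ({0, 1} : Set ℝ)) :
    torusMk (C.f u) ∈ C'.image := by
  by_cases hu : torusMk (C.f u) ∈ (fun z => torusMk (B.E z)) '' (({0, 1} : Set ℝ) ×ˢ Icc 0 1)
  · obtain ⟨z, ⟨hz₁, hz₂⟩, hz⟩ := hu
    have hz₁' := pair_zero_one_subset_Icc hz₁
    exact hz ▸ B.torusMk_E_mem_image ⟨hz₁', h z ⟨hz₁', hz₂⟩ hz.symm⟩
  · exact B.image_eq ▸ .inl ⟨mem_range_self u, hu⟩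

/-- The parameters of `C` between the two arcs of surgery, on the side following `g₀`. -/
def gapOne : Set ℝ := ⋂ y ∈ Icc (0 : ℝ) 1, Icc (B.g₀ y) (B.g₁ y)

/-- The parameters of `C` between the two arcs of surgery, on the side following `g₁`. -/
def gapTwo : Set ℝ := ⋂ y ∈ Icc (0 : ℝ) 1, Icc (B.g₁ y) (B.g₀ y + 1)

theorem mem_gapOne {u : ℝ} : u ∈ B.gapOne ↔ ∀ y ∈ Icc (0 : ℝ) 1, u ∈ Icc (B.g₀ y) (B.g₁ y) :=
  mem_iInter₂

theorem mem_gapTwo {u : ℝ} : u ∈ B.gapTwo ↔ ∀ y ∈ Icc (0 : ℝ) 1, u ∈ Icc (B.g₁ y) (B.g₀ y + 1) :=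
  mem_iInter₂

theorem isCompact_gapOne : IsCompact B.gapOne :=
  isCompact_Icc.of_isClosed_subset (isClosed_biInter fun _ _ => isClosed_Icc)
    (biInter_subset_of_mem unitInterval.zero_mem)

theorem isCompact_gapTwo : IsCompact B.gapTwo :=
  isCompact_Icc.of_isClosed_subset (isClosed_biInter fun _ _ => isClosed_Icc)
    (biInter_subset_of_mem unitInterval.zero_mem)

theorem convex_gapOne : Convex ℝ B.gapOne := convex_iInter₂ fun _ _ => convex_Icc _ _

theorem convex_gapTwo : Convex ℝ B.gapTwo := convex_iInter₂ fun _ _ => convex_Icc _ _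

theorem eq_of_mem_gapOne {u : ℝ} {z : ℝ × ℝ} (hu : u ∈ B.gapOne)
    (hz : z ∈ Icc (0 : ℝ) 1 ×ˢ Icc (0 : ℝ) 1) (h : torusMk (C.f u) = torusMk (B.E z)) :
    (z.1 = 0 ∧ u = B.g₀ z.2) ∨ (z.1 = 1 ∧ u = B.g₁ z.2) := by
  obtain ⟨h₀, h₁⟩ := B.mem_gapOne.1 hu z.2 hz.2
  obtain ⟨-, hlt⟩ := B.lt z.2 hz.2 z.2 hz.2
  rcases B.param_of_torusMk_eq hz h with ⟨hz₁, k, rfl⟩ | ⟨hz₁, k, rfl⟩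
  · have hlow : 0 ≤ k := by exact_mod_cast (by linarith : (0 : ℝ) ≤ k)
    have hupp : k < 1 := by exact_mod_cast (by linarith : (k : ℝ) < 1)
    have hk : k = 0 := by omega
    exact .inl ⟨hz₁, by simp [hk]⟩
  · have hlow : -1 < k := by exact_mod_cast (by linarith : (-1 : ℝ) < k)
    have hupp : k ≤ 0 := by exact_mod_cast (by linarith : (k : ℝ) ≤ 0)
    have hk : k = 0 := by omega
    exact .inr ⟨hz₁, by simp [hk]⟩

theorem eq_of_mem_gapTwo {u : ℝ} {z : ℝ × ℝ} (hu : u ∈ B.gapTwo)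
    (hz : z ∈ Icc (0 : ℝ) 1 ×ˢ Icc (0 : ℝ) 1) (h : torusMk (C.f u) = torusMk (B.E z)) :
    (z.1 = 0 ∧ u = B.g₀ z.2 + 1) ∨ (z.1 = 1 ∧ u = B.g₁ z.2) := by
  obtain ⟨h₁, h₀⟩ := B.mem_gapTwo.1 hu z.2 hz.2
  obtain ⟨hlt, -⟩ := B.lt z.2 hz.2 z.2 hz.2
  rcases B.param_of_torusMk_eq hz h with ⟨hz₁, k, rfl⟩ | ⟨hz₁, k, rfl⟩
  · have hlow : 0 < k := by exact_mod_cast (by linarith : (0 : ℝ) < k)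
    have hupp : k ≤ 1 := by exact_mod_cast (by linarith : (k : ℝ) ≤ 1)
    have hk : k = 1 := by omega
    exact .inl ⟨hz₁, by simp [hk]⟩
  · have hlow : 0 ≤ k := by exact_mod_cast (by linarith : (0 : ℝ) ≤ k)
    have hupp : k < 1 := by exact_mod_cast (by linarith : (k : ℝ) < 1)
    have hk : k = 0 := by omega
    exact .inr ⟨hz₁, by simp [hk]⟩

theorem torusMk_ne_of_mem_gaps {u u' : ℝ} (hu : u ∈ B.gapOne) (hu' : u' ∈ B.gapTwo) :
    torusMk (C.f u) ≠ torusMk (C.f u') := by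
  intro h
  obtain ⟨k, rfl⟩ := C.inj _ _ h
  have hone := B.mem_gapOne.1 hu
  have htwo := B.mem_gapTwo.1 hu'
  obtain ⟨h₀, h₁⟩ := hone 0 unitInterval.zero_mem
  obtain ⟨h₁', h₀'⟩ := htwo 0 unitInterval.zero_mem
  have hk₀ : 0 ≤ k := by exact_mod_cast (by linarith : (0 : ℝ) ≤ k)
  have hk₁ : k ≤ 1 := by exact_mod_cast (by linarith : (k : ℝ) ≤ 1)
  obtain rfl | rfl : k = 0 ∨ k = 1 := by omega
  · refine zero_ne_one (B.injOn_g₁ unitInterval.zero_mem unitInterval.one_mem ?_)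
    simp only [Int.cast_zero, add_zero] at htwo
    exact (le_antisymm (htwo 0 unitInterval.zero_mem).1 (hone 0 unitInterval.zero_mem).2).trans
      (le_antisymm (hone 1 unitInterval.one_mem).2 (htwo 1 unitInterval.one_mem).1)
  · refine zero_ne_one (B.injOn_g₀ unitInterval.zero_mem unitInterval.one_mem ?_)
    simp only [Int.cast_one, add_le_add_iff_right, mem_Icc] at htwo
    exact (le_antisymm (hone 0 unitInterval.zero_mem).1 (htwo 0 unitInterval.zero_mem).2).trans
      (le_antisymm (htwo 1 unitInterval.one_mem).2 (hone 1 unitInterval.one_mem).1)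

theorem exists_sub_mem_gaps {u : ℝ}
    (h : torusMk (C.f u) ∉ (fun z => torusMk (B.E z)) '' (({0, 1} : Set ℝ) ×ˢ Icc 0 1)) :
    ∃ k : ℤ, u - k ∈ B.gapOne ∨ u - k ∈ B.gapTwo := by
  have hsub {v : ℝ} {k : ℤ} (hk : u - v = k) : torusMk (C.f u) = torusMk (C.f v) := by
    rw [← C.isLoopLift.torusMk_add_int v k, ← hk, add_sub_cancel]
  have hne₀ (y : I) (k : ℤ) : u - B.g₀ y ≠ k := fun hk =>
    h ⟨(0, y), ⟨by simp, y.2⟩, ((hsub hk).trans (B.torusMk_g₀ y.2)).symm⟩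
  have hne₁ (y : I) (k : ℤ) : u - B.g₁ y ≠ k := fun hk =>
    h ⟨(1, y), ⟨by simp, y.2⟩, ((hsub hk).trans (B.torusMk_g₁ y.2)).symm⟩
  have := B.continuous_g₀
  have := B.continuous_g₁
  obtain ⟨k₀, hk₀⟩ := exists_int_lt_lt_of_forall_ne_int (by fun_prop) hne₀
  obtain ⟨k₁, hk₁⟩ := exists_int_lt_lt_of_forall_ne_int (by fun_prop) hne₁
  obtain ⟨hlt, hlt'⟩ := B.lt 0 unitInterval.zero_mem 0 unitInterval.zero_mem
  obtain ⟨h₀, h₀'⟩ := hk₀ 0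
  obtain ⟨h₁, h₁'⟩ := hk₁ 0
  rw [Icc.coe_zero] at h₀ h₀' h₁ h₁'
  have hle : k₁ < k₀ + 1 := by exact_mod_cast (by linarith : (k₁ : ℝ) < k₀ + 1)
  have hle' : k₀ < k₁ + 1 + 1 := by exact_mod_cast (by linarith : (k₀ : ℝ) < k₁ + 1 + 1)
  refine ⟨k₀, ?_⟩
  obtain rfl | rfl : k₀ = k₁ + 1 ∨ k₀ = k₁ := by omega
  · refine .inl (B.mem_gapOne.2 fun y hy => ?_)
    have hlow := (hk₀ ⟨y, hy⟩).1
    have hupp := (hk₁ ⟨y, hy⟩).2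
    push_cast at hlow ⊢
    constructor <;> linarith
  · refine .inr (B.mem_gapTwo.2 fun y hy => ?_)
    have hlow := (hk₁ ⟨y, hy⟩).1
    have hupp := (hk₀ ⟨y, hy⟩).2
    constructor <;> linarith

theorem mem_image_cases {p : Torus} (hp : p ∈ C'.image) :
    (∃ u ∈ B.gapOne, torusMk (C.f u) = p) ∨ (∃ u ∈ B.gapTwo, torusMk (C.f u) = p) ∨
      ∃ z ∈ Icc (0 : ℝ) 1 ×ˢ ({0, 1} : Set ℝ), torusMk (B.E z) = p := by
  rcases B.image_eq.subset hp with ⟨⟨u, rfl⟩, hside⟩ | hedge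
  · obtain ⟨k, hk⟩ := B.exists_sub_mem_gaps hside
    have hshift : torusMk (C.f (u - k)) = torusMk (C.f u) := by
      rw [← C.isLoopLift.torusMk_add_int _ k, sub_add_cancel]
    exact hk.imp (fun hk => ⟨_, hk, hshift⟩) fun hk => .inl ⟨_, hk, hshift⟩
  · exact .inr (.inr hedge)

variable {B}

theorem snd_eq_one_of_mem_gapOne (h₀ : StrictMonoOn B.g₀ (Icc 0 1))
    (h₁ : StrictAntiOn B.g₁ (Icc 0 1)) {u : ℝ} {z : ℝ × ℝ} (hu : u ∈ B.gapOne)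
    (hz : z ∈ Icc (0 : ℝ) 1 ×ˢ Icc (0 : ℝ) 1) (h : torusMk (C.f u) = torusMk (B.E z)) :
    z.2 = 1 := by
  obtain ⟨hu₀, hu₁⟩ := B.mem_gapOne.1 hu 1 unitInterval.one_mem
  refine hz.2.2.antisymm ?_
  rcases B.eq_of_mem_gapOne hu hz h with ⟨-, rfl⟩ | ⟨-, rfl⟩
  exacts [(h₀.le_iff_le unitInterval.one_mem hz.2).1 hu₀,
    (h₁.le_iff_ge hz.2 unitInterval.one_mem).1 hu₁]

theorem snd_eq_zero_of_mem_gapTwo (h₀ : StrictMonoOn B.g₀ (Icc 0 1))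
    (h₁ : StrictAntiOn B.g₁ (Icc 0 1)) {u : ℝ} {z : ℝ × ℝ} (hu : u ∈ B.gapTwo)
    (hz : z ∈ Icc (0 : ℝ) 1 ×ˢ Icc (0 : ℝ) 1) (h : torusMk (C.f u) = torusMk (B.E z)) :
    z.2 = 0 := by
  obtain ⟨hu₁, hu₀⟩ := B.mem_gapTwo.1 hu 0 unitInterval.zero_mem
  refine le_antisymm ?_ hz.2.1
  rcases B.eq_of_mem_gapTwo hu hz h with ⟨-, rfl⟩ | ⟨-, rfl⟩
  exacts [(h₀.le_iff_le hz.2 unitInterval.zero_mem).1 (le_of_add_le_add_right hu₀),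
    (h₁.le_iff_ge unitInterval.zero_mem hz.2).1 hu₁]

/-- If the two sides of the band ran along `C` in opposite directions, the edges `y = 1` and
`y = 0` would close up the two gaps separately and disconnect `C'`. -/
theorem not_strictAntiOn_g₁ (h₀ : StrictMonoOn B.g₀ (Icc 0 1)) :
    ¬ StrictAntiOn B.g₁ (Icc 0 1) := by
  intro h₁
  let K (gap : Set ℝ) (y : ℝ) : Set Torus :=
    (fun u => torusMk (C.f u)) '' gap ∪ (fun z => torusMk (B.E z)) '' (Icc 0 1 ×ˢ {y})
  have hK (gap : Set ℝ) (hgap : IsCompact gap) (y : ℝ) : IsClosed (K gap y) :=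
    ((hgap.image (continuous_torusMk.comp C.cont)).union
      ((isCompact_Icc.prod isCompact_singleton).image
        (continuous_torusMk.comp B.continuous_E))).isClosed
  have hcover : C'.image ⊆ K B.gapOne 1 ∪ K B.gapTwo 0 := fun p hp => by
    rcases B.mem_image_cases hp with h | h | ⟨⟨x, y⟩, ⟨hx, rfl | rfl⟩, rfl⟩
    exacts [.inl (.inl h), .inr (.inl h), .inr (.inr ⟨(x, 0), ⟨hx, rfl⟩, rfl⟩),
      .inl (.inr ⟨(x, 1), ⟨hx, rfl⟩, rfl⟩)]
  have hcorner (gap : Set ℝ) (y : ℝ) (hy : y ∈ ({0, 1} : Set ℝ)) : (C'.image ∩ K gap y).Nonempty :=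
    ⟨torusMk (B.E (0, y)), B.torusMk_E_mem_image ⟨unitInterval.zero_mem, hy⟩,
      .inr ⟨(0, y), ⟨unitInterval.zero_mem, rfl⟩, rfl⟩⟩
  obtain ⟨p, -, hp₁, hp₀⟩ := isPreconnected_closed_iff.1
    (isPreconnected_range (continuous_torusMk.comp C'.cont)) _ _
    (hK _ B.isCompact_gapOne 1) (hK _ B.isCompact_gapTwo 0) hcover
    (hcorner _ _ (by simp)) (hcorner _ _ (by simp))
  rcases hp₁ with ⟨u, hu, rfl⟩ | ⟨⟨x, y⟩, ⟨hx, rfl⟩, rfl⟩ <;>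
    rcases hp₀ with ⟨u', hu', h⟩ | ⟨⟨x', y'⟩, ⟨hx', rfl⟩, h⟩
  · exact B.torusMk_ne_of_mem_gaps hu hu' h.symm
  · exact zero_ne_one
      (snd_eq_one_of_mem_gapOne h₀ h₁ hu (mk_mem_prod hx' unitInterval.zero_mem) h.symm)
  · exact one_ne_zero
      (snd_eq_zero_of_mem_gapTwo h₀ h₁ hu' (mk_mem_prod hx unitInterval.one_mem) h)
  · exact zero_ne_one (congrArg Prod.snd
      (B.injOn (mk_mem_prod hx' unitInterval.zero_mem) (mk_mem_prod hx unitInterval.one_mem) h))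

theorem exists_strictMonoOn (B : SurgeryBand C C') : ∃ B : SurgeryBand C C',
    StrictMonoOn B.g₀ (Icc 0 1) ∧ StrictMonoOn B.g₁ (Icc 0 1) := by
  have hpos {B : SurgeryBand C C'} (h₀ : StrictMonoOn B.g₀ (Icc 0 1)) :
      StrictMonoOn B.g₁ (Icc 0 1) :=
    (B.continuous_g₁.continuousOn.strictMonoOn_of_injOn_Icc' zero_le_one B.injOn_g₁).resolve_right
      (not_strictAntiOn_g₁ h₀)
  rcases B.continuous_g₀.continuousOn.strictMonoOn_of_injOn_Icc' zero_le_one B.injOn_g₀ with h₀ | h₀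
  · exact ⟨B, h₀, hpos h₀⟩
  · have hflip : StrictMonoOn B.flip.g₀ (Icc 0 1) := fun y hy y' hy' hlt =>
      h₀ (Icc.one_sub_mem hy') (Icc.one_sub_mem hy) (sub_lt_sub_left hlt 1)
    exact ⟨B.flip, hflip, hpos hflip⟩

theorem eq_corner_of_mem_gapOne (h₀ : StrictMonoOn B.g₀ (Icc 0 1))
    (h₁ : StrictMonoOn B.g₁ (Icc 0 1)) {u : ℝ} {z : ℝ × ℝ} (hu : u ∈ B.gapOne)
    (hz : z ∈ Icc (0 : ℝ) 1 ×ˢ Icc (0 : ℝ) 1) (h : torusMk (C.f u) = torusMk (B.E z)) :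
    z = (0, 1) ∨ z = (1, 0) := by
  rcases B.eq_of_mem_gapOne hu hz h with ⟨hz₁, rfl⟩ | ⟨hz₁, rfl⟩
  · exact .inl (Prod.ext hz₁ (hz.2.2.antisymm
      ((h₀.le_iff_le unitInterval.one_mem hz.2).1 (B.mem_gapOne.1 hu 1 unitInterval.one_mem).1)))
  · exact .inr (Prod.ext hz₁ (le_antisymm ((h₁.le_iff_le hz.2 unitInterval.zero_mem).1
      (B.mem_gapOne.1 hu 0 unitInterval.zero_mem).2) hz.2.1))

theorem eq_corner_of_mem_gapTwo (h₀ : StrictMonoOn B.g₀ (Icc 0 1))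
    (h₁ : StrictMonoOn B.g₁ (Icc 0 1)) {u : ℝ} {z : ℝ × ℝ} (hu : u ∈ B.gapTwo)
    (hz : z ∈ Icc (0 : ℝ) 1 ×ˢ Icc (0 : ℝ) 1) (h : torusMk (C.f u) = torusMk (B.E z)) :
    z = (0, 0) ∨ z = (1, 1) := by
  rcases B.eq_of_mem_gapTwo hu hz h with ⟨hz₁, rfl⟩ | ⟨hz₁, rfl⟩
  · exact .inl (Prod.ext hz₁ (le_antisymm ((h₀.le_iff_le hz.2 unitInterval.zero_mem).1
      (le_of_add_le_add_right (B.mem_gapTwo.1 hu 0 unitInterval.zero_mem).2)) hz.2.1))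
  · exact .inr (Prod.ext hz₁ (hz.2.2.antisymm
      ((h₁.le_iff_le unitInterval.one_mem hz.2).1 (B.mem_gapTwo.1 hu 1 unitInterval.one_mem).1)))

theorem mem_gapOne_of_monotone (h₀ : StrictMonoOn B.g₀ (Icc 0 1))
    (h₁ : StrictMonoOn B.g₁ (Icc 0 1)) : B.g₀ 1 ∈ B.gapOne ∧ B.g₁ 0 ∈ B.gapOne :=
  ⟨B.mem_gapOne.2 fun y hy =>
    ⟨h₀.monotoneOn hy unitInterval.one_mem hy.2, (B.lt 1 unitInterval.one_mem y hy).1.le⟩,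
    B.mem_gapOne.2 fun y hy =>
      ⟨(B.lt y hy 0 unitInterval.zero_mem).1.le, h₁.monotoneOn unitInterval.zero_mem hy hy.1⟩⟩

theorem mem_gapTwo_of_monotone (h₀ : StrictMonoOn B.g₀ (Icc 0 1))
    (h₁ : StrictMonoOn B.g₁ (Icc 0 1)) : B.g₁ 1 ∈ B.gapTwo ∧ B.g₀ 0 + 1 ∈ B.gapTwo :=
  ⟨B.mem_gapTwo.2 fun y hy =>
    ⟨h₁.monotoneOn hy unitInterval.one_mem hy.2, (B.lt y hy 1 unitInterval.one_mem).2.le⟩,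
    B.mem_gapTwo.2 fun y hy =>
      ⟨(B.lt 0 unitInterval.zero_mem y hy).2.le,
        add_le_add_left (h₀.monotoneOn unitInterval.zero_mem hy hy.1) 1⟩⟩

/-- The path that crosses the band along `ρ` and then follows `C` from parameter `u` to parameter
`v`, on the lift of `C` translated by `N`. -/
noncomputable def arc (B : SurgeryBand C C') (ρ : ℝ → ℝ × ℝ) (u v : ℝ) (N : ℤ × ℤ) (x : ℝ) :
    ℝ × ℝ :=
  if x ≤ 1 / 2 then B.E (ρ (2 * x)) else C.f (AffineMap.lineMap u v (2 * x - 1)) + latticeHom N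

section Arc

variable {ρ : ℝ → ℝ × ℝ} {u v : ℝ} {N : ℤ × ℤ} {x : ℝ}

theorem arc_of_le (hx : x ≤ 1 / 2) : B.arc ρ u v N x = B.E (ρ (2 * x)) := if_pos hx

theorem arc_zero : B.arc ρ u v N 0 = B.E (ρ 0) := by rw [arc_of_le (by norm_num), mul_zero]

theorem arc_one : B.arc ρ u v N 1 = C.f v + latticeHom N := by
  rw [arc, if_neg (by norm_num), mul_one, show (2 - 1 : ℝ) = 1 by norm_num,
    AffineMap.lineMap_apply_one]

theorem continuous_arc (hρ : Continuous ρ) (h : B.E (ρ 1) = C.f u + latticeHom N) :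
    Continuous (B.arc ρ u v N) := by
  have := B.continuous_E
  have := C.cont
  refine Continuous.if_le (by fun_prop) (by fun_prop) continuous_id continuous_const fun x hx => ?_
  rw [show 2 * x = 1 by linarith, sub_self, AffineMap.lineMap_apply_zero, h]

theorem torusMk_arc_cases {gap : Set ℝ} (hgap : Convex ℝ gap) (hu : u ∈ gap) (hv : v ∈ gap)
    (hx : x ∈ Ico (0 : ℝ) 1) :
    (2 * x ∈ Icc (0 : ℝ) 1 ∧ torusMk (B.arc ρ u v N x) = torusMk (B.E (ρ (2 * x)))) ∨
      ∃ u' ∈ gap, torusMk (B.arc ρ u v N x) = torusMk (C.f u') := by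
  by_cases h : x ≤ 1 / 2
  · exact .inl ⟨⟨by linarith [hx.1], by linarith⟩, by rw [arc_of_le h]⟩
  · refine .inr ⟨_, hgap.lineMap_mem hu hv ⟨?_, ?_⟩, (congrArg torusMk (if_neg h)).trans
      (torusMk_add_latticeHom _ _)⟩ <;> linarith [hx.2]

end Arc

theorem eq_of_torusMk_arc_eq (h₀ : StrictMonoOn B.g₀ (Icc 0 1)) (h₁ : StrictMonoOn B.g₁ (Icc 0 1))
    {N N' : ℤ × ℤ} {s t : ℝ} (hs : s ∈ Ico (0 : ℝ) 1) (ht : t ∈ Ico (0 : ℝ) 1)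
    (h : torusMk (B.arc (fun x => (1 - x, x)) (B.g₀ 1) (B.g₁ 0) N s) =
      torusMk (B.arc (fun x => (x, x)) (B.g₁ 1) (B.g₀ 0 + 1) N' t)) :
    s = 1 / 4 ∧ t = 1 / 4 := by
  obtain ⟨hgap₁, hgap₁'⟩ := mem_gapOne_of_monotone h₀ h₁
  obtain ⟨hgap₂, hgap₂'⟩ := mem_gapTwo_of_monotone h₀ h₁
  rcases torusMk_arc_cases B.convex_gapOne hgap₁ hgap₁' hs with ⟨hs₁, hs'⟩ | ⟨u, hu, hs'⟩ <;>
    rcases torusMk_arc_cases B.convex_gapTwo hgap₂ hgap₂' ht with ⟨ht₁, ht'⟩ | ⟨u', hu', ht'⟩ <;>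
    rw [hs', ht'] at h
  · obtain ⟨hst, hst'⟩ := Prod.ext_iff.1
      (B.injOn (mk_mem_prod (Icc.one_sub_mem hs₁) hs₁) (mk_mem_prod ht₁ ht₁) h)
    constructor <;> linarith
  · rcases eq_corner_of_mem_gapTwo h₀ h₁ hu' (mk_mem_prod (Icc.one_sub_mem hs₁) hs₁) h.symm with
      hz | hz <;> linarith [(Prod.ext_iff.1 hz).1, (Prod.ext_iff.1 hz).2]
  · rcases eq_corner_of_mem_gapOne h₀ h₁ hu (mk_mem_prod ht₁ ht₁) h with
      hz | hz <;> linarith [(Prod.ext_iff.1 hz).1, (Prod.ext_iff.1 hz).2]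
  · exact absurd h (B.torusMk_ne_of_mem_gaps hu hu')

theorem injOn_chart : InjOn (fun z : ℝ × ℝ =>
    B.E (1 / 2 - 2 * z.1 + 2 * z.2, 1 / 2 + 2 * z.1 + 2 * z.2)) (closedBall 0 (1 / 8)) := by
  have hmem (z : ℝ × ℝ) (hz : z ∈ closedBall (0 : ℝ × ℝ) (1 / 8)) :
      (1 / 2 - 2 * z.1 + 2 * z.2, 1 / 2 + 2 * z.1 + 2 * z.2) ∈
        Icc (0 : ℝ) 1 ×ˢ Icc (0 : ℝ) 1 := by
    rw [mem_closedBall_zero_iff, Prod.norm_def, sup_le_iff, Real.norm_eq_abs, Real.norm_eq_abs,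
      abs_le, abs_le] at hz
    obtain ⟨⟨h₁, h₂⟩, h₃, h₄⟩ := hz
    exact ⟨⟨by linarith, by linarith⟩, by linarith, by linarith⟩
  intro z hz z' hz' h
  obtain ⟨h₁, h₂⟩ := Prod.ext_iff.1 (B.injOn (hmem z hz) (hmem z' hz') (congrArg torusMk h))
  exact Prod.ext (by linarith) (by linarith)

/-- Close up the gaps of `C` by the two diagonals of the band: the loops obtained cross at the
centre of the band only. -/
theorem intersectionNumber_shift (h₀ : StrictMonoOn B.g₀ (Icc 0 1))
    (h₁ : StrictMonoOn B.g₁ (Icc 0 1)) :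
    intersectionNumber (-B.shift) (C.homologyClass + B.shift) = 1 ∨
      intersectionNumber (-B.shift) (C.homologyClass + B.shift) = -1 := by
  have hE := B.continuous_E
  have hα : B.E (0, 1) = C.f (B.g₀ 1) + latticeHom 0 := by
    rw [B.side_zero 1 unitInterval.one_mem, map_zero, add_zero]
  have hα' : C.f (B.g₁ 0) + latticeHom 0 = B.E (1, 0) + latticeHom (-B.shift) := by
    rw [B.side_one 0 unitInterval.zero_mem, map_zero, map_neg, add_zero, add_neg_cancel_right]
  have hβ' : C.f (B.g₀ 0 + 1) + latticeHom B.shift =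
      B.E (0, 0) + latticeHom (C.homologyClass + B.shift) := by
    rw [B.side_zero 0 unitInterval.zero_mem, C.isLoopLift.map_add_one, map_add, add_assoc]
  have hsmall {s : ℝ} (hs : |s| ≤ 1 / 8) : s + 1 / 4 ≤ 1 / 2 := by linarith [(abs_le.1 hs).2]
  refine (crossOnce_loopLift
    (continuous_arc (ρ := fun x => (1 - x, x)) (by fun_prop) (by simpa only [sub_self] using hα))
    (continuous_arc (ρ := fun x => (x, x)) (by fun_prop) (B.side_one 1 unitInterval.one_mem))
    (by rw [arc_one, arc_zero, sub_zero, hα']) (by rw [arc_one, arc_zero, hβ'])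
    (fun s hs t ht => eq_of_torusMk_arc_eq h₀ h₁ hs ht) (by fun_prop) (by norm_num) B.injOn_chart
    (fun x hx => ⟨by linarith [hx.1], by linarith [hx.2]⟩) (fun s hs => ?_)
    fun t ht => ?_).intersectionNumber_eq
  · rw [arc_of_le (hsmall hs)]
    congr 1
    ext <;> dsimp only <;> ring
  · rw [arc_of_le (hsmall ht)]
    congr 1
    ext <;> dsimp only <;> ring

theorem torusMk_mem_image_of_mem_gapOne (h₀ : StrictMonoOn B.g₀ (Icc 0 1))
    (h₁ : StrictMonoOn B.g₁ (Icc 0 1)) {u : ℝ} (hu : u ∈ B.gapOne) :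
    torusMk (C.f u) ∈ C'.image :=
  B.torusMk_f_mem_image fun z hz h => by
    rcases eq_corner_of_mem_gapOne h₀ h₁ hu hz h with rfl | rfl <;> simp

theorem torusMk_mem_image_of_mem_gapTwo (h₀ : StrictMonoOn B.g₀ (Icc 0 1))
    (h₁ : StrictMonoOn B.g₁ (Icc 0 1)) {u : ℝ} (hu : u ∈ B.gapTwo) :
    torusMk (C.f u) ∈ C'.image :=
  B.torusMk_f_mem_image fun z hz h => by
    rcases eq_corner_of_mem_gapTwo h₀ h₁ hu hz h with rfl | rfl <;> simp

theorem joinedIn_edge (B : SurgeryBand C C') {y : ℝ} (hy : y ∈ ({0, 1} : Set ℝ)) :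
    JoinedIn (torusMk ⁻¹' C'.image) (B.E (0, y)) (B.E (1, y)) := by
  have := B.continuous_E
  refine joinedIn_of_image_uIcc_subset (f := fun x => B.E (x, y)) (by fun_prop) ?_
  rintro _ ⟨x, hx, rfl⟩
  rw [uIcc_of_le zero_le_one] at hx
  exact B.torusMk_E_mem_image ⟨hx, hy⟩

/-- Follow `C'` once around: the first gap, the edge `y = 0`, the second gap, the edge `y = 1`. -/
theorem exists_zsmul_eq (h₀ : StrictMonoOn B.g₀ (Icc 0 1)) (h₁ : StrictMonoOn B.g₁ (Icc 0 1)) :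
    ∃ m : ℤ, C.homologyClass + 2 • B.shift = m • C'.homologyClass := by
  have hjoin {gap : Set ℝ} (hconv : Convex ℝ gap)
      (hgap : ∀ u ∈ gap, torusMk (C.f u) ∈ C'.image) {u v : ℝ} (hu : u ∈ gap) (hv : v ∈ gap) :
      JoinedIn (torusMk ⁻¹' C'.image) (C.f u) (C.f v) :=
    joinedIn_of_image_uIcc_subset C.cont (image_subset_iff.2 fun x hx =>
      hgap x (hconv.ordConnected.uIcc_subset hu hv hx))
  obtain ⟨hu₁, hu₁'⟩ := mem_gapOne_of_monotone h₀ h₁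
  obtain ⟨hu₂, hu₂'⟩ := mem_gapTwo_of_monotone h₀ h₁
  have hgap₁ := hjoin B.convex_gapOne (fun u => torusMk_mem_image_of_mem_gapOne h₀ h₁) hu₁ hu₁'
  have hgap₂ := hjoin B.convex_gapTwo (fun u => torusMk_mem_image_of_mem_gapTwo h₀ h₁) hu₂ hu₂'
  have hedge₀ := B.joinedIn_edge (y := 0) (by simp)
  have hedge₁ := B.joinedIn_edge (y := 1) (by simp)
  rw [B.side_zero _ unitInterval.zero_mem, B.side_one _ unitInterval.zero_mem] at hedge₀
  rw [B.side_zero _ unitInterval.one_mem, B.side_one _ unitInterval.one_mem] at hedge₁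
  rw [C.isLoopLift.map_add_one] at hgap₂
  have hpath₁ := (joinedIn_add_latticeHom hgap₁ B.shift).trans hedge₀.symm
  have hpath₂ := (joinedIn_add_latticeHom hpath₁ C.homologyClass).trans hgap₂.symm
  have hloop := ((joinedIn_add_latticeHom hpath₂ B.shift).trans hedge₁.symm).symm
  rw [add_assoc, add_assoc, ← map_add, ← map_add] at hloop
  obtain ⟨m, hm⟩ := TorusCurve.exists_zsmul_of_joinedIn hloop
  exact ⟨m, by rw [← hm, two_nsmul]; abel⟩

theorem intersectionNumber_homologyClass (B : SurgeryBand C C') :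
    intersectionNumber C'.homologyClass C.homologyClass = 2 ∨
      intersectionNumber C'.homologyClass C.homologyClass = -2 := by
  obtain ⟨B, h₀, h₁⟩ := B.exists_strictMonoOn
  obtain ⟨m, hm⟩ := exists_zsmul_eq h₀ h₁
  exact intersectionNumber_eq_two_of_zsmul_eq C.prim hm (intersectionNumber_shift h₀ h₁)

end SurgeryBand

end SurgeryBand

section Surgery

theorem obtainedBySurgery_union {X : Set Torus} {e : ℝ × ℝ → Torus} (he : Continuous e)
    (hinj : InjOn e (Icc 0 1 ×ˢ Icc 0 1))
    (hX : X ∩ e '' (Icc 0 1 ×ˢ Icc 0 1) ⊆ e '' ({0, 1} ×ˢ {0, 1})) :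
    ObtainedBySurgery (X ∪ e '' ({0, 1} ×ˢ Icc 0 1)) (X ∪ e '' (Icc 0 1 ×ˢ {0, 1})) := by
  have hsides : e '' ({0, 1} ×ˢ Icc 0 1) ⊆ e '' (Icc 0 1 ×ˢ Icc 0 1) :=
    image_mono (prod_mono_left pair_zero_one_subset_Icc)
  refine ⟨e, he, hinj, ?_, ?_⟩
  · rw [union_inter_distrib_right, inter_eq_left.2 hsides]
    exact union_eq_right.2 (hX.trans (image_mono (prod_mono_right pair_zero_one_subset_Icc)))
  · rw [union_sdiff_right]
    refine (union_subset_union_left _ sdiff_subset).antisymm' (union_subset (fun x hx => ?_)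
      subset_union_right)
    by_cases hx' : x ∈ e '' ({0, 1} ×ˢ Icc 0 1)
    · exact .inr (image_mono (prod_mono_left pair_zero_one_subset_Icc) (hX ⟨hx, hsides hx'⟩))
    · exact .inl ⟨hx, hx'⟩

end Surgery

section SquareCurve

/-- The linear map of the plane taking the standard basis to `a` and `b`. -/
noncomputable def basisMap (a b : ℤ × ℤ) (z : ℝ × ℝ) : ℝ × ℝ :=
  z.1 • latticeHom a + z.2 • latticeHom b

variable {a b : ℤ × ℤ}

theorem continuous_basisMap : Continuous (basisMap a b) := by
  unfold basisMap
  fun_prop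

theorem basisMap_add (z z' : ℝ × ℝ) : basisMap a b (z + z') = basisMap a b z + basisMap a b z' := by
  simp only [basisMap, Prod.fst_add, Prod.snd_add, add_smul]
  abel

theorem basisMap_latticeHom (n : ℤ × ℤ) :
    basisMap a b (latticeHom n) = latticeHom (n.1 • a + n.2 • b) := by
  simp only [basisMap, latticeHom_fst, latticeHom_snd, map_add, map_zsmul, Int.cast_smul_eq_zsmul]

theorem torusMk_basisMap_add_latticeHom (z : ℝ × ℝ) (n : ℤ × ℤ) :
    torusMk (basisMap a b (z + latticeHom n)) = torusMk (basisMap a b z) := by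
  rw [basisMap_add, basisMap_latticeHom, torusMk_add_latticeHom]

theorem exists_of_torusMk_basisMap_eq (hab : IsUnit (intersectionNumber a b)) {z z' : ℝ × ℝ}
    (h : torusMk (basisMap a b z) = torusMk (basisMap a b z')) : ∃ n, z' = z + latticeHom n := by
  obtain ⟨m, hm⟩ := torusMk_eq_torusMk_iff.1 h
  have hsq : ((a.1 : ℝ) * b.2 - a.2 * b.1) * (a.1 * b.2 - a.2 * b.1) = 1 := by
    exact_mod_cast Int.isUnit_mul_self hab
  obtain ⟨h₁, h₂⟩ := Prod.ext_iff.1 hm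
  simp only [basisMap, Prod.fst_add, Prod.snd_add, Prod.smul_fst, Prod.smul_snd, latticeHom_fst,
    latticeHom_snd, smul_eq_mul] at h₁ h₂
  refine ⟨intersectionNumber a b • (intersectionNumber m b, intersectionNumber a m),
    Prod.ext ?_ ?_⟩ <;>
  simp only [Prod.fst_add, Prod.snd_add, latticeHom_fst, latticeHom_snd, Prod.smul_fst,
    Prod.smul_snd, smul_eq_mul, intersectionNumber] <;> push_cast
  · linear_combination (a.1 * b.2 - a.2 * b.1 : ℝ) * (b.2 * h₁ - b.1 * h₂) - (z'.1 - z.1) * hsq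
  · linear_combination (a.1 * b.2 - a.2 * b.1 : ℝ) * (a.1 * h₂ - a.2 * h₁) - (z'.2 - z.2) * hsq

/-- The distance from `2 * t` to the even integers, truncated to `[1/3, 2/3]`. -/
noncomputable def offset (t : ℝ) : ℝ := max (1 / 3) (min (2 / 3) (2 * ‖(t : AddCircle (1 : ℝ))‖))

/-- A lift of a curve of homology class `(1, 1)` that runs along the two coordinate circles except
near their intersection point, where it turns from one to the other. -/
noncomputable def stair (t : ℝ) : ℝ × ℝ := (t + offset t / 2, t - offset t / 2)

theorem offset_mem_Icc (t : ℝ) : offset t ∈ Icc (1 / 3 : ℝ) (2 / 3) :=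
  ⟨le_max_left _ _, max_le (by norm_num) (min_le_left _ _)⟩

theorem continuous_offset : Continuous offset := by
  have := AddCircle.continuous_mk' (1 : ℝ)
  unfold offset
  fun_prop

theorem offset_add_one (t : ℝ) : offset (t + 1) = offset t := by
  rw [offset, AddCircle.coe_add_period, offset]

theorem offset_of_abs_le {t : ℝ} (ht : |t| ≤ 1 / 2) :
    offset t = max (1 / 3) (min (2 / 3) (2 * |t|)) := by
  rw [offset, (AddCircle.norm_coe_eq_abs_iff 1 one_ne_zero).2 (by simpa using ht)]

theorem offset_of_mem_Icc {t : ℝ} (ht : t ∈ Icc (1 / 3 : ℝ) (2 / 3)) : offset t = 2 / 3 := by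
  have hle : 1 / 3 ≤ ‖(t : AddCircle (1 : ℝ))‖ := by
    rw [UnitAddCircle.norm_eq, le_abs]
    rcases le_or_gt (round t) 0 with h | h
    · have : (round t : ℝ) ≤ 0 := by exact_mod_cast h
      exact .inl (by linarith [ht.1])
    · have : (1 : ℝ) ≤ round t := by exact_mod_cast h
      exact .inr (by linarith [ht.2])
  rw [offset, min_eq_left (by linarith), max_eq_right (by norm_num)]

theorem isLoopLift_stair : IsLoopLift stair (1, 1) where
  continuous := by
    have := continuous_offset
    unfold stair
    fun_prop
  map_add_one t := by
    ext <;> simp only [stair, offset_add_one, Prod.fst_add, Prod.snd_add, latticeHom_fst,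
      latticeHom_snd, Int.cast_one] <;> ring

theorem exists_int_of_stair_eq {x y : ℝ} {n : ℤ × ℤ} (h : stair y = stair x + latticeHom n) :
    ∃ k : ℤ, y = x + k := by
  obtain ⟨h₁, h₂⟩ := Prod.ext_iff.1 h
  simp only [stair, Prod.fst_add, Prod.snd_add, latticeHom_fst, latticeHom_snd] at h₁ h₂
  obtain ⟨hx, hx'⟩ := offset_mem_Icc x
  obtain ⟨hy, hy'⟩ := offset_mem_Icc y
  have hlow : n.2 < n.1 + 1 := by exact_mod_cast (by linarith : (n.2 : ℝ) < n.1 + 1)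
  have hupp : n.1 < n.2 + 1 := by exact_mod_cast (by linarith : (n.1 : ℝ) < n.2 + 1)
  have heq : (n.1 : ℝ) = n.2 := by exact_mod_cast (by omega : n.1 = n.2)
  exact ⟨n.1, by linarith⟩

/-- The curve `stair` in the coordinates given by the lattice basis `a`, `b`. -/
noncomputable def squareCurve (a b : ℤ × ℤ) (hab : IsUnit (intersectionNumber a b)) :
    TorusCurve where
  f t := basisMap a b (stair t)
  cont := continuous_basisMap.comp isLoopLift_stair.continuous
  p := (a + b).1
  q := (a + b).2
  prim := isCoprime_add_of_isUnit_intersectionNumber hab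
  per t := by
    rw [isLoopLift_stair.map_add_one, basisMap_add, basisMap_latticeHom, one_smul, one_smul]
    rfl
  inj x y h := (exists_of_torusMk_basisMap_eq hab h).elim fun _ => exists_int_of_stair_eq

/-- The parts of the coordinate axes shared by `stair` and its mirror image. -/
def arms : Set (ℝ × ℝ) := Icc (1 / 3) (2 / 3) ×ˢ {0} ∪ {0} ×ˢ Icc (1 / 3) (2 / 3)

/-- The square with vertices `(±1/3, 0)` and `(0, ±1/3)`, as a band around the origin. -/
noncomputable def diamond (z : ℝ × ℝ) : ℝ × ℝ := ((z.1 + z.2 - 1) / 3, (z.2 - z.1) / 3)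

theorem stair_of_offset {t c : ℝ} (ht : offset t = c) : stair t = (t + c / 2, t - c / 2) := by
  rw [stair, ht]

theorem stair_eq_diamond_one {y : ℝ} (hy : y ∈ Icc (0 : ℝ) 1) :
    stair ((y - 1 / 2) / 3) = diamond (1, y) := by
  have habs : |(y - 1 / 2) / 3| ≤ 1 / 6 := abs_le.2 ⟨by linarith [hy.1], by linarith [hy.2]⟩
  rw [stair_of_offset (c := 1 / 3)]
  · ext <;> simp only [diamond] <;> ring
  · rw [offset_of_abs_le (by linarith), min_eq_right (by linarith), max_eq_left (by linarith)]

theorem stair_eq_fst {x : ℝ} (hx : x ∈ Icc (1 / 3 : ℝ) (2 / 3)) : stair (x / 2) = (x, 0) := by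
  have habs : |x / 2| = x / 2 := abs_of_nonneg (by linarith [hx.1])
  rw [stair_of_offset (c := x)]
  · ext
    · exact add_halves x
    · exact sub_self _
  · rw [offset_of_abs_le (by linarith [hx.2]), habs, mul_div_cancel₀ _ two_ne_zero,
      min_eq_right hx.2, max_eq_right hx.1]

theorem stair_eq_snd {y : ℝ} (hy : y ∈ Icc (1 / 3 : ℝ) (2 / 3)) :
    stair ((y + 1) / 2) = (0, y) + latticeHom (1, 0) := by
  have habs : |(y - 1) / 2| = (1 - y) / 2 := by
    rw [abs_of_nonpos (by linarith [hy.2])]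
    ring
  rw [stair_of_offset (c := 1 - y)]
  · ext <;> simp only [Prod.fst_add, Prod.snd_add, latticeHom_fst, latticeHom_snd, Int.cast_one,
      Int.cast_zero] <;> ring
  · rw [show (y + 1) / 2 = (y - 1) / 2 + 1 by ring, offset_add_one,
      offset_of_abs_le (by linarith [hy.1]), habs, mul_div_cancel₀ _ two_ne_zero,
      min_eq_right (by linarith [hy.1]), max_eq_right (by linarith [hy.2])]

theorem stair_eq_diamond_zero {y : ℝ} (hy : y ∈ Icc (0 : ℝ) 1) :
    stair ((y + 1) / 3) = diamond (0, y) + latticeHom (1, 0) := by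
  rw [stair_of_offset (offset_of_mem_Icc ⟨by linarith [hy.1], by linarith [hy.2]⟩)]
  ext <;> simp only [diamond, Prod.fst_add, Prod.snd_add, latticeHom_fst, latticeHom_snd,
    Int.cast_one, Int.cast_zero] <;> ring

/-- The band around the origin in the coordinates given by the lattice basis `a`, `b`. -/
noncomputable def squareBand (a b : ℤ × ℤ) (z : ℝ × ℝ) : Torus := torusMk (basisMap a b (diamond z))

theorem squareCurve_image_subset (hab : IsUnit (intersectionNumber a b)) :
    (squareCurve a b hab).image ⊆ (fun z => torusMk (basisMap a b z)) '' arms ∪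
      squareBand a b '' ({0, 1} ×ˢ Icc 0 1) := by
  rintro _ ⟨s, rfl⟩
  have hper : Function.Periodic (fun t => torusMk (basisMap a b (stair t))) 1 := fun t => by
    simp only [isLoopLift_stair.map_add_one, torusMk_basisMap_add_latticeHom]
  obtain ⟨t, ⟨ht, ht'⟩, hst⟩ := hper.exists_mem_Ico one_pos s (-1 / 6)
  change torusMk (basisMap a b (stair s)) ∈ _
  rw [show torusMk (basisMap a b (stair s)) = torusMk (basisMap a b (stair t)) from hst]
  rcases le_total t (1 / 6) with h₁ | h₁
  · have hy : 3 * t + 1 / 2 ∈ Icc (0 : ℝ) 1 := ⟨by linarith, by linarith⟩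
    refine .inr ⟨(1, 3 * t + 1 / 2), ⟨.inr rfl, hy⟩, ?_⟩
    rw [squareBand, ← stair_eq_diamond_one hy]
    congr 3
    ring
  rcases le_total t (1 / 3) with h₂ | h₂
  · have hx : 2 * t ∈ Icc (1 / 3 : ℝ) (2 / 3) := ⟨by linarith, by linarith⟩
    refine .inl ⟨(2 * t, 0), .inl ⟨hx, rfl⟩, ?_⟩
    simp only [← stair_eq_fst hx, mul_div_cancel_left₀ _ (two_ne_zero (α := ℝ))]
  rcases le_total t (2 / 3) with h₃ | h₃
  · have hy : 3 * t - 1 ∈ Icc (0 : ℝ) 1 := ⟨by linarith, by linarith⟩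
    refine .inr ⟨(0, 3 * t - 1), ⟨.inl rfl, hy⟩, ?_⟩
    rw [squareBand, ← torusMk_basisMap_add_latticeHom, ← stair_eq_diamond_zero hy]
    congr 3
    ring
  · have hy : 2 * t - 1 ∈ Icc (1 / 3 : ℝ) (2 / 3) := ⟨by linarith, by linarith⟩
    refine .inl ⟨(0, 2 * t - 1), .inr ⟨rfl, hy⟩, ?_⟩
    simp only
    rw [← torusMk_basisMap_add_latticeHom, ← stair_eq_snd hy]
    congr 3
    ring

theorem squareCurve_image (hab : IsUnit (intersectionNumber a b)) :
    (squareCurve a b hab).image = (fun z => torusMk (basisMap a b z)) '' arms ∪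
      squareBand a b '' ({0, 1} ×ˢ Icc 0 1) := by
  refine (squareCurve_image_subset hab).antisymm ?_
  rintro _ (⟨⟨x, y⟩, ⟨hx, rfl : y = 0⟩ | ⟨rfl : x = 0, hy⟩, rfl⟩ |
    ⟨⟨x, y⟩, ⟨rfl | rfl : x = 0 ∨ x = 1, hy⟩, rfl⟩)
  · exact ⟨x / 2, congrArg (torusMk ∘ basisMap a b) (stair_eq_fst hx)⟩
  · exact ⟨(y + 1) / 2, (congrArg (torusMk ∘ basisMap a b) (stair_eq_snd hy)).trans
      (torusMk_basisMap_add_latticeHom _ _)⟩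
  · exact ⟨(y + 1) / 3, (congrArg (torusMk ∘ basisMap a b) (stair_eq_diamond_zero hy)).trans
      (torusMk_basisMap_add_latticeHom _ _)⟩
  · exact ⟨(y - 1 / 2) / 3, congrArg (torusMk ∘ basisMap a b) (stair_eq_diamond_one hy)⟩

theorem basisMap_neg (z : ℝ × ℝ) : basisMap a (-b) z = basisMap a b (z.1, -z.2) := by
  simp only [basisMap, map_neg, smul_neg, neg_smul]

theorem squareBand_neg (z : ℝ × ℝ) : squareBand a (-b) z = squareBand a b z.swap := by
  rw [squareBand, squareBand, basisMap_neg]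
  congr 2
  ext <;> simp only [diamond, Prod.fst_swap, Prod.snd_swap] <;> ring

theorem squareBand_neg_image_sides : squareBand a (-b) '' ({0, 1} ×ˢ Icc 0 1) =
    squareBand a b '' (Icc 0 1 ×ˢ {0, 1}) := by
  rw [← image_swap_prod, image_image]
  exact image_congr fun z _ => squareBand_neg z.swap

theorem image_arms_neg : (fun z => torusMk (basisMap a (-b) z)) '' arms =
    (fun z => torusMk (basisMap a b z)) '' arms := by
  have hsub (b : ℤ × ℤ) : (fun z => torusMk (basisMap a (-b) z)) '' arms ⊆
      (fun z => torusMk (basisMap a b z)) '' arms := by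
    rintro _ ⟨⟨x, y⟩, ⟨hx, rfl : y = 0⟩ | ⟨rfl : x = 0, hy⟩, rfl⟩
    · exact ⟨(x, 0), .inl ⟨hx, rfl⟩, by simp only [basisMap_neg, neg_zero]⟩
    · refine ⟨(0, 1 - y), .inr ⟨rfl, by linarith [hy.2], by linarith [hy.1]⟩, ?_⟩
      simp only [basisMap_neg]
      rw [← torusMk_basisMap_add_latticeHom (0, -y) (0, 1)]
      congr 2
      ext <;> simp [sub_eq_neg_add]
  exact (hsub b).antisymm (by simpa only [neg_neg] using hsub (-b))

theorem norm_diamond_le {z : ℝ × ℝ} (hz : z ∈ Icc (0 : ℝ) 1 ×ˢ Icc (0 : ℝ) 1) :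
    ‖diamond z‖ ≤ 1 / 3 := by
  obtain ⟨⟨hx, hx'⟩, hy, hy'⟩ := hz
  exact sup_le (abs_le.2 ⟨by simp only [diamond]; linarith, by simp only [diamond]; linarith⟩)
    (abs_le.2 ⟨by simp only [diamond]; linarith, by simp only [diamond]; linarith⟩)

theorem diamond_injective : Function.Injective diamond := fun z z' h => by
  obtain ⟨h₁, h₂⟩ := Prod.ext_iff.1 h
  simp only [diamond] at h₁ h₂
  exact Prod.ext (by linarith) (by linarith)

theorem injOn_squareBand (hab : IsUnit (intersectionNumber a b)) :
    InjOn (squareBand a b) (Icc 0 1 ×ˢ Icc 0 1) := fun z hz z' hz' h => by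
  obtain ⟨n, hn⟩ := exists_of_torusMk_basisMap_eq hab h
  have hsmall : ‖latticeHom n‖ < 1 := by
    rw [eq_sub_of_add_eq' hn.symm]
    linarith [norm_sub_le (diamond z') (diamond z), norm_diamond_le hz, norm_diamond_le hz']
  rw [eq_zero_of_norm_latticeHom_lt_one hsmall, map_zero, add_zero] at hn
  exact (diamond_injective hn).symm

theorem int_eq_zero_of_abs_le {d : ℝ} {n : ℤ} (hd : |d| ≤ 1 / 3) (h : d = n) : n = 0 :=
  Int.abs_lt_one_iff.1 (by exact_mod_cast (h ▸ hd).trans_lt (by norm_num : (1 / 3 : ℝ) < 1))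

theorem eq_or_eq_neg_of_abs_le {d x : ℝ} {n : ℤ} (hd : |d| ≤ 1 / 3)
    (hx : x ∈ Icc (1 / 3 : ℝ) (2 / 3)) (h : d = x + n) : d = 1 / 3 ∨ d = -1 / 3 := by
  obtain ⟨hd, hd'⟩ := abs_le.1 hd
  obtain ⟨hx, hx'⟩ := hx
  have hlow : -2 < n := by exact_mod_cast (by push_cast; linarith : ((-2 : ℤ) : ℝ) < n)
  have hupp : n < 1 := by exact_mod_cast (by linarith : (n : ℝ) < 1)
  obtain rfl | rfl : n = 0 ∨ n = -1 := by omega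
  · exact .inl (by push_cast at h; linarith)
  · exact .inr (by push_cast at h; linarith)

theorem image_arms_inter_squareBand_subset (hab : IsUnit (intersectionNumber a b)) :
    (fun z => torusMk (basisMap a b z)) '' arms ∩ squareBand a b '' (Icc 0 1 ×ˢ Icc 0 1) ⊆
      squareBand a b '' ({0, 1} ×ˢ {0, 1}) := by
  rintro _ ⟨⟨z, hz, rfl⟩, ⟨x, y⟩, hxy, h⟩
  refine ⟨(x, y), ?_, h⟩
  obtain ⟨n, hn⟩ := exists_of_torusMk_basisMap_eq hab h.symm
  obtain ⟨hd₁, hd₂⟩ := sup_le_iff.1 (norm_diamond_le hxy)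
  obtain ⟨h₁, h₂⟩ := Prod.ext_iff.1 hn
  rw [Prod.fst_add, latticeHom_fst] at h₁
  rw [Prod.snd_add, latticeHom_snd] at h₂
  simp only [mem_prod, mem_insert_iff, mem_singleton_iff]
  obtain ⟨hz₁, hz₂ : z.2 = 0⟩ | ⟨hz₁ : z.1 = 0, hz₂⟩ := hz
  · rw [hz₂, zero_add] at h₂
    rw [int_eq_zero_of_abs_le hd₂ h₂, Int.cast_zero] at h₂
    rcases eq_or_eq_neg_of_abs_le hd₁ hz₁ h₁ with h | h <;> simp only [diamond] at h h₂
    · exact ⟨.inr (by linarith), .inr (by linarith)⟩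
    · exact ⟨.inl (by linarith), .inl (by linarith)⟩
  · rw [hz₁, zero_add] at h₁
    rw [int_eq_zero_of_abs_le hd₁ h₁, Int.cast_zero] at h₁
    rcases eq_or_eq_neg_of_abs_le hd₂ hz₂ h₂ with h | h <;> simp only [diamond] at h h₁
    · exact ⟨.inl (by linarith), .inr (by linarith)⟩
    · exact ⟨.inr (by linarith), .inl (by linarith)⟩

theorem obtainedBySurgery_squareCurve (hab : IsUnit (intersectionNumber a b)) :
    ObtainedBySurgery (squareCurve a b hab).image
      (squareCurve a (-b) (isUnit_intersectionNumber_neg hab)).image := by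
  rw [squareCurve_image, squareCurve_image, image_arms_neg, squareBand_neg_image_sides]
  refine obtainedBySurgery_union (continuous_torusMk.comp (continuous_basisMap.comp ?_))
    (injOn_squareBand hab) (image_arms_inter_squareBand_subset hab)
  unfold diamond
  fun_prop

end SquareCurve

/-- Let `T` be the torus and `C, C'` essential oriented simple closed
curves on `T`, of (primitive) homology classes `v` and `w`.  Then `C'`
can be obtained from `C` by a surgery along an embedded arc if and only
if the algebraic intersection number `C'·C = w.1 * v.2 - w.2 * v.1`
equals `±2`.  (Curves on the torus are determined up to isotopy by their
homology class.) -/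
theorem surgery_iff_intersection_two (v w : ℤ × ℤ)
    (hv : IsCoprime v.1 v.2) (hw : IsCoprime w.1 w.2) :
    (∃ C C' : TorusCurve, C.p = v.1 ∧ C.q = v.2 ∧ C'.p = w.1 ∧ C'.q = w.2 ∧
      ObtainedBySurgery C.image C'.image) ↔
    (w.1 * v.2 - w.2 * v.1 = 2 ∨ w.1 * v.2 - w.2 * v.1 = -2) := by
  change _ ↔ intersectionNumber w v = 2 ∨ intersectionNumber w v = -2
  constructor
  · rintro ⟨C, C', hp, hq, hp', hq', h⟩
    obtain ⟨B⟩ := h.nonempty_surgeryBand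
    have hC : C.homologyClass = v := Prod.ext hp hq
    have hC' : C'.homologyClass = w := Prod.ext hp' hq'
    rw [← hC, ← hC']
    exact B.intersectionNumber_homologyClass
  · intro h
    obtain ⟨a, b, hab, rfl, rfl⟩ := exists_eq_add_eq_sub_of_intersectionNumber_eq_two hv hw h
    exact ⟨squareCurve a b hab, squareCurve a (-b) (isUnit_intersectionNumber_neg hab),
      rfl, rfl, rfl, rfl, obtainedBySurgery_squareCurve hab⟩
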